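/- Let 1 < p < ∞, −1 < α < ∞, let ω be a radial weight in the class D̂, and let ν(s) = ω(s) ω̂₁(s)^α. Then the Bergman projection P_ω is bounded on L^p_ν if and only if A_p(ω,ν) < ∞, and this holds if and only if α < p − 1. -/

import Mathlib

open MeasureTheory Set Metric
open scoped ENNReal NNReal

noncomputable section

/-- `ω̂(r) = ∫_r^1 ω(s) ds`. -/
def hatw (w : ℝ → ℝ) (r : ℝ) : ℝ := ∫ s in Set.Ioo r 1, w s

/-- `ω̂₁(r) = ∫_r^1 s ω(s) ds`. -/
def hat1 (w : ℝ → ℝ) (r : ℝ) : ℝ := ∫ s in Set.Ioo r 1, s * w s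

/-- A radial weight: nonnegative, integrable on `[0,1)`, with `ω̂(r) > 0` for `0 ≤ r < 1`. -/
def IsRadialWeight (w : ℝ → ℝ) : Prop :=
  (∀ r ∈ Set.Ico (0:ℝ) 1, 0 ≤ w r) ∧ MeasureTheory.IntegrableOn w (Set.Ico (0:ℝ) 1) ∧
    ∀ r ∈ Set.Ico (0:ℝ) 1, 0 < hatw w r

/-- The class `D̂`: `sup_{0 ≤ r < 1} ω̂(r)/ω̂((1+r)/2) < ∞`. -/
def Dhat (w : ℝ → ℝ) : Prop :=
  ∃ C : ℝ, ∀ r ∈ Set.Ico (0:ℝ) 1, hatw w r ≤ C * hatw w ((1 + r) / 2)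

/-- The odd moment `ω_{2n+1} = ∫₀¹ r^{2n+1} ω(r) dr`. -/
def moment (w : ℝ → ℝ) (n : ℕ) : ℝ := ∫ r in Set.Ioo (0:ℝ) 1, r ^ (2 * n + 1) * w r

/-- The Bergman reproducing kernel `B_z^ω(ζ) = Σ_n (conj z · ζ)^n / (2 ω_{2n+1})`. -/
def Bker (w : ℝ → ℝ) (z ζ : ℂ) : ℂ :=
  ∑' n : ℕ, ((starRingEnd ℂ) z * ζ) ^ n / ((2 * moment w n : ℝ) : ℂ)

/-- The `L^p_ν` norm (with `dA` = area measure divided by `π`) of a complex-valued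
function on the unit disc. -/
def LpC (p : ℝ) (v : ℝ → ℝ) (f : ℂ → ℂ) : ℝ≥0∞ :=
  ((∫⁻ z in Metric.ball (0:ℂ) 1, ENNReal.ofReal (‖f z‖ ^ p * v ‖z‖)) /
    ENNReal.ofReal Real.pi) ^ (1 / p)

/-- The Bergman projection `P_ω(f)(z) = ∫_𝔻 f(ζ) conj(B_z^ω(ζ)) ω(ζ) dA(ζ)`. -/
def Pw (w : ℝ → ℝ) (f : ℂ → ℂ) (z : ℂ) : ℂ :=
  (∫ ζ in Metric.ball (0:ℂ) 1, f ζ * (starRingEnd ℂ) (Bker w z ζ) * ((w ‖ζ‖ : ℝ) : ℂ)) /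
    ((Real.pi : ℝ) : ℂ)

/-- `P_ω` is bounded on `L^p_ν`: for every `f ∈ L^p_ν` the defining integral converges
absolutely for a.e. `z ∈ 𝔻` and `‖P_ω f‖_{L^p_ν} ≤ C ‖f‖_{L^p_ν}`. -/
def PwBounded (p : ℝ) (w v : ℝ → ℝ) : Prop :=
  ∃ C > (0:ℝ), ∀ f : ℂ → ℂ, Measurable f → LpC p v f < ⊤ →
    (∀ᵐ z ∂(volume.restrict (Metric.ball (0:ℂ) 1)),
      (∫⁻ ζ in Metric.ball (0:ℂ) 1, ENNReal.ofReal (‖f ζ‖ * ‖Bker w z ζ‖ * w ‖ζ‖)) < ⊤) ∧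
    LpC p v (Pw w f) ≤ ENNReal.ofReal C * LpC p v f

/-- `σ(s) = (ω(s)/ν(s)^{1/p})^{p'}`, as an extended nonnegative real (so `σ(s) = ∞`
when `ν(s) = 0 < ω(s)`). -/
def sigmaE (p : ℝ) (w v : ℝ → ℝ) (s : ℝ) : ℝ≥0∞ :=
  (ENNReal.ofReal (w s) / ENNReal.ofReal (v s) ^ (1 / p)) ^ (p / (p - 1))

/-- The Muckenhoupt-type quantity
`A_p(ω,ν) = sup_{0 ≤ r < 1} ν̂₁(r)^{1/p} σ̂₁(r)^{1/p'} / ω̂₁(r)` (note `1/p' = 1 - 1/p`). -/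
def ApE (p : ℝ) (w v : ℝ → ℝ) : ℝ≥0∞ :=
  ⨆ r ∈ Set.Ico (0:ℝ) 1,
    (∫⁻ s in Set.Ioo r 1, ENNReal.ofReal (s * v s)) ^ (1 / p) *
      (∫⁻ s in Set.Ioo r 1, ENNReal.ofReal s * sigmaE p w v s) ^ (1 - 1 / p) /
      ENNReal.ofReal (hat1 w r)

/-!
In the variable `u = ω̂₁(r)` the measure `r ω(r) dr` becomes Lebesgue measure on an interval
`(0, c)`, and `ν` becomes the power weight `u ^ α`.

* `A_p(ω, ν)` is then a supremum over `x` of products of `∫₀ˣ u ^ α du` and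
  `∫₀ˣ u ^ (-α / (p - 1)) du`; the second integral is finite exactly when `α < p - 1`, and in that
  case the powers of `x` cancel.
* If `α ≥ p - 1`, then `L^p_ν` contains the radial function `u⁻¹ (1 + |log u|)⁻¹`, which is not
  integrable. As the kernel is bounded below near the origin, the integral defining `P_ω` diverges
  there.
* If `α < p - 1`, compare integral means over circles. By the Cauchy-Schwarz inequality the moments
  are log-convex in their index, so the coefficients `q ^ n / (2 ω_{2n+1})` are unimodal and bounded
  by a multiple of `1 / ω̂₁(√q)`. Summation by parts dominates the kernel by the Cauchy kernel, and
  M. Riesz's theorem together with the doubling condition `D̂` bounds the projection from the circle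
  of radius `s` to that of radius `r` by a multiple of `1 / ω̂₁(r s)`, hence of
  `1 / max (ω̂₁(r)) (ω̂₁(s))`. It remains to bound the operator with kernel `1 / max u v` on
  `L^p(u ^ α du)`, which is Schur's test with powers of `u`.
-/

section IntegralInequalities

variable {X Y : Type*} [MeasurableSpace X] [MeasurableSpace Y] {μ : Measure X} {ν : Measure Y}
  {p : ℝ}

lemma rpow_lintegral_mul_le (hp : 1 < p) {f c : X → ℝ≥0∞} (hf : AEMeasurable f μ)
    (hc : AEMeasurable c μ) :
    (∫⁻ x, f x * c x ∂μ) ^ p ≤ (∫⁻ x, f x ^ p * c x ∂μ) * (∫⁻ x, c x ∂μ) ^ (p - 1) := by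
  have hpq := Real.HolderConjugate.conjExponent hp
  set q := p.conjExponent with hq
  have hp0 : 0 < p := hpq.pos
  have hq0 : 0 < q := hpq.symm.pos
  have hsplit (x : X) : f x * c x = f x * c x ^ (1 / p) * c x ^ (1 / q) := by
    rw [mul_assoc, ← ENNReal.rpow_add_of_nonneg _ _ (by positivity) (by positivity), one_div,
      one_div, hpq.inv_add_inv_eq_one, ENNReal.rpow_one]
  have hfc (x : X) : (f x * c x ^ (1 / p)) ^ p = f x ^ p * c x := by
    rw [ENNReal.mul_rpow_of_nonneg _ _ hp0.le, ← ENNReal.rpow_mul, one_div_mul_cancel hp0.ne',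
      ENNReal.rpow_one]
  have hcq (x : X) : (c x ^ (1 / q)) ^ q = c x := by
    rw [← ENNReal.rpow_mul, one_div_mul_cancel hq0.ne', ENNReal.rpow_one]
  calc (∫⁻ x, f x * c x ∂μ) ^ p
      ≤ ((∫⁻ x, f x ^ p * c x ∂μ) ^ (1 / p) * (∫⁻ x, c x ∂μ) ^ (1 / q)) ^ p := by
        gcongr
        simpa only [hsplit, hfc, hcq, Pi.mul_apply] using
          ENNReal.lintegral_mul_le_Lp_mul_Lq μ hpq (hf.mul (hc.pow_const (1 / p)))
            (hc.pow_const (1 / q))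
    _ = _ := by
        have hqp : 1 / q * p = p - 1 := by
          rw [hq, Real.conjExponent]
          field_simp
        rw [ENNReal.mul_rpow_of_nonneg _ _ hp0.le, ← ENNReal.rpow_mul, ← ENNReal.rpow_mul, hqp,
          one_div_mul_cancel hp0.ne', ENNReal.rpow_one]

lemma ennreal_rpow_sub_one_mul_self (hp : 1 ≤ p) (a : ℝ≥0∞) : a ^ (p - 1) * a = a ^ p := by
  nth_rw 2 [← ENNReal.rpow_one a]
  rw [← ENNReal.rpow_add_of_nonneg _ _ (sub_nonneg.2 hp) zero_le_one, sub_add_cancel]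

lemma ennreal_div_rpow_mul_self {a b : ℝ≥0∞} (hp : 1 < p) (hb : b ≠ 0) (hbt : b ≠ ⊤) :
    (a / b) ^ p * b = a ^ p * (b ^ (p - 1))⁻¹ := by
  rw [ENNReal.div_rpow_of_nonneg _ _ (by linarith), ← ennreal_rpow_sub_one_mul_self hp.le b,
    div_eq_mul_inv, ENNReal.mul_inv (Or.inr hbt) (Or.inr hb), mul_assoc, mul_assoc,
    ENNReal.inv_mul_cancel hb hbt, mul_one]

lemma rpow_lintegral_kernel_mul_le (hp : 1 < p) {k f ψ : X → ℝ≥0∞} (hk : Measurable k)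
    (hf : AEMeasurable f μ) (hψ : Measurable ψ) (hψ0 : ∀ᵐ x ∂μ, ψ x ≠ 0)
    (hψt : ∀ᵐ x ∂μ, ψ x ≠ ⊤) :
    (∫⁻ x, k x * f x ∂μ) ^ p ≤
      (∫⁻ x, f x ^ p * (ψ x ^ (p - 1))⁻¹ * k x ∂μ) * (∫⁻ x, k x * ψ x ∂μ) ^ (p - 1) :=
  calc (∫⁻ x, k x * f x ∂μ) ^ p = (∫⁻ x, f x / ψ x * (k x * ψ x) ∂μ) ^ p := by
        congr 1
        refine lintegral_congr_ae ?_
        filter_upwards [hψ0, hψt] with x h0 ht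
        rw [mul_left_comm, ENNReal.div_mul_cancel h0 ht]
    _ ≤ (∫⁻ x, (f x / ψ x) ^ p * (k x * ψ x) ∂μ) * (∫⁻ x, k x * ψ x ∂μ) ^ (p - 1) :=
        rpow_lintegral_mul_le hp (hf.div hψ.aemeasurable) (hk.mul hψ).aemeasurable
    _ = _ := by
        congr 1
        refine lintegral_congr_ae ?_
        filter_upwards [hψ0, hψt] with x h0 ht
        rw [mul_left_comm, ennreal_div_rpow_mul_self hp h0 ht, mul_comm]

lemma lintegral_div_rpow_mul_le (hp : 0 < p) {f : X → ℝ≥0∞} (hf : Measurable f) {c : ℝ≥0∞}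
    (hc : c ≠ ⊤) (hfc : ∫⁻ x, f x ^ p ∂μ = c ^ p) : ∫⁻ x, (f x / c) ^ p * c ∂μ ≤ c := by
  rcases eq_or_ne c 0 with h0 | h0
  · simp [h0]
  rw [lintegral_mul_const _ (by fun_prop)]
  simp_rw [div_eq_mul_inv, ENNReal.mul_rpow_of_nonneg _ _ hp.le]
  rw [lintegral_mul_const _ (by fun_prop), hfc, ← ENNReal.mul_rpow_of_nonneg _ _ hp.le,
    ENNReal.mul_inv_cancel h0 hc, ENNReal.one_rpow, one_mul]

variable [SFinite μ] [SFinite ν]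

lemma lintegral_mul_lintegral_mul_kernel {K : X → Y → ℝ≥0∞}
    (hK : Measurable (Function.uncurry K)) {u : X → ℝ≥0∞} (hu : Measurable u) {h : Y → ℝ≥0∞}
    (hh : AEMeasurable h ν) :
    ∫⁻ x, u x * ∫⁻ y, h y * K x y ∂ν ∂μ = ∫⁻ y, h y * ∫⁻ x, u x * K x y ∂μ ∂ν := by
  have hKx (x : X) : Measurable (K x) := hK.of_uncurry_left
  have hm : AEMeasurable (Function.uncurry fun x y => h y * (u x * K x y)) (μ.prod ν) :=
    hh.comp_snd.mul (by fun_prop)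
  calc ∫⁻ x, u x * ∫⁻ y, h y * K x y ∂ν ∂μ = ∫⁻ x, ∫⁻ y, h y * (u x * K x y) ∂ν ∂μ := by
        refine lintegral_congr fun x => ?_
        have hhK : AEMeasurable (fun y => h y * K x y) ν := hh.mul (hKx x).aemeasurable
        rw [← lintegral_const_mul'' (u x) hhK]
        exact lintegral_congr fun y => mul_left_comm ..
    _ = ∫⁻ y, h y * ∫⁻ x, u x * K x y ∂μ ∂ν := by
        rw [lintegral_lintegral_swap hm]
        exact lintegral_congr fun y => lintegral_const_mul _ (by fun_prop)

theorem lintegral_mul_rpow_kernel_le (hp : 1 < p) {K : X → Y → ℝ≥0∞}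
    (hK : Measurable (Function.uncurry K)) {u φ : X → ℝ≥0∞} (hu : Measurable u)
    (hφ : Measurable φ) {v ψ f : Y → ℝ≥0∞} (hψ : Measurable ψ) (hf : AEMeasurable f ν)
    (hψ0 : ∀ᵐ y ∂ν, ψ y ≠ 0) (hψt : ∀ᵐ y ∂ν, ψ y ≠ ⊤) {A B : ℝ≥0}
    (hA : ∀ᵐ x ∂μ, ∫⁻ y, K x y * ψ y ∂ν ≤ A * φ x)
    (hB : ∀ᵐ y ∂ν, ∫⁻ x, u x * φ x ^ (p - 1) * K x y ∂μ ≤ B * (v y * ψ y ^ (p - 1))) :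
    ∫⁻ x, u x * (∫⁻ y, K x y * f y ∂ν) ^ p ∂μ ≤ A ^ (p - 1) * B * ∫⁻ y, v y * f y ^ p ∂ν := by
  have hp1 : 0 ≤ p - 1 := (sub_pos.2 hp).le
  set h : Y → ℝ≥0∞ := fun y => f y ^ p * (ψ y ^ (p - 1))⁻¹
  have hhm : AEMeasurable h ν := (hf.pow_const p).mul (hψ.pow_const _).inv.aemeasurable
  have hKx (x : X) : Measurable (K x) := hK.of_uncurry_left
  calc ∫⁻ x, u x * (∫⁻ y, K x y * f y ∂ν) ^ p ∂μ
      ≤ ∫⁻ x, A ^ (p - 1) * (u x * φ x ^ (p - 1) * ∫⁻ y, h y * K x y ∂ν) ∂μ := by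
        refine lintegral_mono_ae ?_
        filter_upwards [hA] with x hx
        calc u x * (∫⁻ y, K x y * f y ∂ν) ^ p
            ≤ u x * ((∫⁻ y, h y * K x y ∂ν) * (∫⁻ y, K x y * ψ y ∂ν) ^ (p - 1)) := by
              gcongr
              exact rpow_lintegral_kernel_mul_le hp (hKx x) hf hψ hψ0 hψt
          _ ≤ u x * ((∫⁻ y, h y * K x y ∂ν) * (A * φ x) ^ (p - 1)) := by gcongr
          _ = _ := by
            rw [ENNReal.mul_rpow_of_nonneg _ _ hp1]
            ring
    _ = A ^ (p - 1) * ∫⁻ y, h y * ∫⁻ x, u x * φ x ^ (p - 1) * K x y ∂μ ∂ν := by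
        rw [lintegral_const_mul' _ _ (ENNReal.rpow_ne_top_of_nonneg hp1 ENNReal.coe_ne_top),
          lintegral_mul_lintegral_mul_kernel hK (by fun_prop) hhm]
    _ ≤ A ^ (p - 1) * ∫⁻ y, B * (v y * f y ^ p) ∂ν := by
        gcongr _ * ?_
        refine lintegral_mono_ae ?_
        filter_upwards [hB, hψ0, hψt] with y hy h0 ht
        calc h y * ∫⁻ x, u x * φ x ^ (p - 1) * K x y ∂μ
            ≤ h y * (B * (v y * ψ y ^ (p - 1))) := by gcongr
          _ = B * (v y * f y ^ p) * ((ψ y ^ (p - 1))⁻¹ * ψ y ^ (p - 1)) := by ring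
          _ = _ := by
            rw [ENNReal.inv_mul_cancel (by simp [h0, ht]) (by simp [h0, ht]), mul_one]
    _ = _ := by rw [lintegral_const_mul' _ _ ENNReal.coe_ne_top, mul_assoc]

lemma ae_ae_eq_zero_of_lintegral_rpow_eq_zero (hp : 0 < p) {F : X → Y → ℝ≥0∞}
    (hF : Measurable (Function.uncurry F)) :
    ∀ᵐ x ∂μ, ∀ᵐ y ∂ν, ∫⁻ x, F x y ^ p ∂μ = 0 → F x y = 0 := by
  have hm : Measurable fun y => ∫⁻ x, F x y ^ p ∂μ := by fun_prop
  refine Measure.ae_ae_comm ?_ |>.1 (.of_forall fun y => ?_)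
  · exact (hm.comp measurable_fst (measurableSet_singleton 0)).imp
      (hF.comp measurable_swap (measurableSet_singleton 0))
  rw [Filter.eventually_imp_distrib_left]
  intro h0
  have hFy : Measurable fun x => F x y := hF.of_uncurry_right
  rw [lintegral_eq_zero_iff (by fun_prop)] at h0
  filter_upwards [h0] with x hx
  simpa [hp, hp.not_gt] using hx

theorem rpow_lintegral_lintegral_le (hp : 1 < p) {F : X → Y → ℝ≥0∞}
    (hF : Measurable (Function.uncurry F)) :
    ∫⁻ x, (∫⁻ y, F x y ∂ν) ^ p ∂μ ≤ (∫⁻ y, (∫⁻ x, F x y ^ p ∂μ) ^ (1 / p) ∂ν) ^ p := by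
  have hp0 : 0 < p := by linarith
  set c : Y → ℝ≥0∞ := fun y => (∫⁻ x, F x y ^ p ∂μ) ^ (1 / p) with hc
  have hcm : Measurable c := by fun_prop
  by_cases hI : ∫⁻ y, c y ∂ν = ⊤
  · simp [hI, hp0]
  have hct : ∀ᵐ y ∂ν, c y ≠ ⊤ := ae_lt_top hcm hI |>.mono fun y hy => hy.ne
  have hcp (y : Y) : ∫⁻ x, F x y ^ p ∂μ = c y ^ p := by
    rw [hc, ← ENNReal.rpow_mul, one_div_mul_cancel hp0.ne', ENNReal.rpow_one]
  have hF0 := ae_ae_eq_zero_of_lintegral_rpow_eq_zero hp0 hF (μ := μ) (ν := ν)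
  calc ∫⁻ x, (∫⁻ y, F x y ∂ν) ^ p ∂μ
      = ∫⁻ x, (∫⁻ y, F x y / c y * c y ∂ν) ^ p ∂μ := by
        refine lintegral_congr_ae ?_
        filter_upwards [hF0] with x hx
        congr 1
        refine lintegral_congr_ae ?_
        filter_upwards [hx, hct] with y hy ht
        rcases eq_or_ne (c y) 0 with h0 | h0
        · simp [h0, hy (by rw [hcp, h0, ENNReal.zero_rpow_of_pos hp0])]
        · rw [ENNReal.div_mul_cancel h0 ht]
    _ ≤ ∫⁻ x, (∫⁻ y, (F x y / c y) ^ p * c y ∂ν) * (∫⁻ y, c y ∂ν) ^ (p - 1) ∂μ := by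
        gcongr with x
        exact rpow_lintegral_mul_le hp (hF.of_uncurry_left.div hcm).aemeasurable hcm.aemeasurable
    _ = (∫⁻ y, ∫⁻ x, (F x y / c y) ^ p * c y ∂μ ∂ν) * (∫⁻ y, c y ∂ν) ^ (p - 1) := by
        rw [lintegral_mul_const' _ _ (ENNReal.rpow_ne_top_of_nonneg (sub_pos.2 hp).le hI),
          lintegral_lintegral_swap]
        fun_prop
    _ ≤ (∫⁻ y, c y ∂ν) * (∫⁻ y, c y ∂ν) ^ (p - 1) := by
        gcongr ?_ * _
        refine lintegral_mono_ae ?_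
        filter_upwards [hct] with y ht
        exact lintegral_div_rpow_mul_le hp0 hF.of_uncurry_right ht (hcp y)
    _ = _ := by
      rw [mul_comm, ennreal_rpow_sub_one_mul_self hp.le]

end IntegralInequalities

section Circle

/-- The normalized arc length measure of the unit circle, in the angular coordinate
`θ ∈ (-π, π)`. -/
def angleMeasure : Measure ℝ :=
  ENNReal.ofReal (2 * Real.pi)⁻¹ • volume.restrict (Ioo (-Real.pi) Real.pi)

instance : IsProbabilityMeasure angleMeasure where
  measure_univ := by
    have h2π : Real.pi - -Real.pi = 2 * Real.pi := by ring
    rw [angleMeasure, Measure.smul_apply, Measure.restrict_apply_univ, Real.volume_Ioo, h2π,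
      smul_eq_mul, ← ENNReal.ofReal_mul (by positivity), inv_mul_cancel₀ (by positivity),
      ENNReal.ofReal_one]

lemma memLp_angleMeasure_of_continuous {E : Type*} [NormedAddCommGroup E] {f : ℝ → E}
    (hf : Continuous f) (p : ℝ≥0∞) : MemLp f p angleMeasure := by
  obtain ⟨C, hC⟩ := isCompact_Icc (a := -Real.pi) (b := Real.pi) |>.exists_bound_of_continuousOn
    hf.continuousOn
  have hsupp : ∀ᵐ θ ∂angleMeasure, θ ∈ Ioo (-Real.pi) Real.pi :=
    Measure.ae_smul_measure (ae_restrict_mem measurableSet_Ioo) _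
  exact .of_bound hf.aestronglyMeasurable C (hsupp.mono fun θ hθ => hC θ (Ioo_subset_Icc_self hθ))

lemma integrable_angleMeasure_of_continuous {E : Type*} [NormedAddCommGroup E] {f : ℝ → E}
    (hf : Continuous f) : Integrable f angleMeasure :=
  memLp_one_iff_integrable.1 (memLp_angleMeasure_of_continuous hf 1)

lemma integral_angleMeasure {E : Type*} [NormedAddCommGroup E] [NormedSpace ℝ E] (f : ℝ → E) :
    ∫ t, f t ∂angleMeasure = (2 * Real.pi)⁻¹ • ∫ t in Ioo (-Real.pi) Real.pi, f t := by
  rw [angleMeasure, integral_smul_measure, ENNReal.toReal_ofReal (by positivity)]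

lemma circleMap_mem_unitBall {r : ℝ} (hr : r ∈ Ico (0 : ℝ) 1) (θ : ℝ) :
    circleMap 0 r θ ∈ ball (0 : ℂ) 1 := by
  simpa [abs_of_nonneg hr.1] using hr.2

lemma mul_circleMap_mem_unitBall {z : ℂ} (hz : z ∈ ball (0 : ℂ) 1) (t : ℝ) :
    z * circleMap 0 1 t ∈ ball (0 : ℂ) 1 := by
  simpa using hz

lemma integral_angleMeasure_circleMap {H : ℂ → ℂ} (hH : DifferentiableOn ℂ H (ball 0 1))
    {r : ℝ} (hr : r ∈ Ico (0 : ℝ) 1) :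
    ∫ t, H (circleMap 0 r t) ∂angleMeasure = H 0 := by
  have hd : DiffContOnCl ℂ H (ball 0 |r|) :=
    hH.diffContOnCl_ball (closedBall_subset_ball (by simpa [abs_of_nonneg hr.1] using hr.2))
  have hper : Function.Periodic (fun t : ℝ => H (circleMap 0 r t)) (2 * Real.pi) :=
    (periodic_circleMap 0 r).comp H
  have hπ : -Real.pi + 2 * Real.pi = Real.pi := by ring
  rw [← hd.circleAverage, Real.circleAverage_def, integral_angleMeasure,
    ← integral_Ioc_eq_integral_Ioo, ← intervalIntegral.integral_of_le (by linarith [Real.pi_pos])]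
  simpa [hπ] using hper.intervalIntegral_add_eq (-Real.pi) 0

/-- The convolution on the circle of `g` with the function `k` on the disc: at
`z = r * exp (θ * I)` it is the mean over `t` of `g t * k (r * exp ((θ - t) * I))`. -/
def circleConv (k : ℂ → ℂ) (g : ℝ → ℂ) (z : ℂ) : ℂ :=
  ∫ t, g t * k (z * circleMap 0 1 (-t)) ∂angleMeasure

lemma circleMap_mul_circleMap_neg (r θ t : ℝ) :
    circleMap 0 r θ * circleMap 0 1 (-t) = circleMap 0 r (θ - t) := by
  rw [circleMap_zero_mul, mul_one, sub_eq_add_neg]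

variable {k : ℂ → ℂ} {g : ℝ → ℂ} {z : ℂ}

lemma continuous_kernel_mul_circleMap (hk : ContinuousOn k (ball 0 1))
    (hz : z ∈ ball (0 : ℂ) 1) : Continuous fun t : ℝ => k (z * circleMap 0 1 (-t)) :=
  hk.comp_continuous (by fun_prop) fun t => mul_circleMap_mem_unitBall hz _

lemma integrable_mul_kernel (hk : ContinuousOn k (ball 0 1)) (hg : Integrable g angleMeasure)
    (hz : z ∈ ball (0 : ℂ) 1) :
    Integrable (fun t => g t * k (z * circleMap 0 1 (-t))) angleMeasure := by
  have hc := continuous_kernel_mul_circleMap hk hz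
  obtain ⟨C, hC⟩ := (isCompact_closedBall (0 : ℂ) ‖z‖).exists_bound_of_continuousOn
    (hk.mono (closedBall_subset_ball (by simpa using hz)))
  exact hg.mul_bdd (c := C) hc.aestronglyMeasurable (.of_forall fun t => hC _ (by simp))

theorem differentiableOn_circleConv (hk : DifferentiableOn ℂ k (ball 0 1))
    (hg : Integrable g angleMeasure) : DifferentiableOn ℂ (circleConv k g) (ball 0 1) := by
  intro z hz
  obtain ⟨R, hzR, hR⟩ := exists_between (mem_ball_zero_iff.1 hz)
  have hsub : ball (0 : ℂ) R ⊆ ball 0 1 := ball_subset_ball hR.le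
  have hdk : ContinuousOn (deriv k) (ball 0 1) := (hk.deriv isOpen_ball).continuousOn
  obtain ⟨C, hC⟩ := (isCompact_closedBall (0 : ℂ) R).exists_bound_of_continuousOn
    (hdk.mono (closedBall_subset_ball hR))
  have hs : ball (0 : ℂ) R ∈ nhds z := isOpen_ball.mem_nhds (by simpa using hzR)
  refine (hasDerivAt_integral_of_dominated_loc_of_deriv_le (𝕜 := ℂ)
    (F' := fun y t => g t * (deriv k (y * circleMap 0 1 (-t)) * circleMap 0 1 (-t)))
    (bound := fun t => ‖g t‖ * C) hs ?_ (integrable_mul_kernel hk.continuousOn hg hz) ?_ ?_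
    (hg.norm.mul_const C) ?_).2.differentiableAt.differentiableWithinAt
  · filter_upwards [hs] with y hy
    exact (integrable_mul_kernel hk.continuousOn hg (hsub hy)).aestronglyMeasurable
  · exact hg.aestronglyMeasurable.mul
      ((continuous_kernel_mul_circleMap hdk hz).mul (by fun_prop)).aestronglyMeasurable
  · refine .of_forall fun t y hy => ?_
    rw [norm_mul, norm_mul, norm_circleMap_zero, abs_one, mul_one]
    gcongr
    exact hC _ (by simpa using (mem_ball_zero_iff.1 hy).le)
  · refine .of_forall fun t y hy => .const_mul _ ?_
    have hkt := (hk.differentiableAt (isOpen_ball.mem_nhds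
      (mul_circleMap_mem_unitBall (hsub hy) (-t)))).hasDerivAt
    simpa [Function.comp_def] using hkt.comp y ((hasDerivAt_id y).mul_const (circleMap 0 1 (-t)))

lemma continuous_circleConv_circleMap (hk : DifferentiableOn ℂ k (ball 0 1))
    (hg : Integrable g angleMeasure) {r : ℝ} (hr : r ∈ Ico (0 : ℝ) 1) :
    Continuous fun θ => circleConv k g (circleMap 0 r θ) :=
  (differentiableOn_circleConv hk hg).continuousOn.comp_continuous (continuous_circleMap 0 r)
    (circleMap_mem_unitBall hr)

lemma circleConv_add {h : ℝ → ℂ} (hk : ContinuousOn k (ball 0 1)) (hg : Integrable g angleMeasure)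
    (hh : Integrable h angleMeasure) (hz : z ∈ ball (0 : ℂ) 1) :
    circleConv k (fun t => g t + h t) z = circleConv k g z + circleConv k h z := by
  simp only [circleConv, add_mul]
  exact integral_add (integrable_mul_kernel hk hg hz) (integrable_mul_kernel hk hh hz)

lemma circleConv_const_mul (c : ℂ) : circleConv k (fun t => c * g t) z = c * circleConv k g z := by
  simp only [circleConv, mul_assoc, integral_const_mul]

lemma re_circleConv_ofReal {g : ℝ → ℝ} (hk : ContinuousOn k (ball 0 1))
    (hg : Integrable g angleMeasure) (hz : z ∈ ball (0 : ℂ) 1) :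
    (circleConv k (fun t => (g t : ℂ)) z).re =
      ∫ t, g t * (k (z * circleMap 0 1 (-t))).re ∂angleMeasure := by
  have hgc : Integrable (fun t => (g t : ℂ)) angleMeasure := hg.ofReal
  have hre := integral_re (𝕜 := ℂ) (integrable_mul_kernel hk hgc hz)
  simp only [RCLike.re_eq_complex_re, Complex.re_ofReal_mul] at hre
  exact hre.symm

/-- Convolution with `k` on every circle of radius less than one is bounded on `L^p`, with
norm at most `C`. -/
def CircleConvBound (p : ℝ≥0∞) (k : ℂ → ℂ) (C : ℝ≥0) : Prop :=
  ∀ g : ℝ → ℂ, MemLp g p angleMeasure → ∀ r ∈ Ico (0 : ℝ) 1,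
    eLpNorm (fun θ => circleConv k g (circleMap 0 r θ)) p angleMeasure ≤
      C * eLpNorm g p angleMeasure

end Circle

section CauchyKernel

variable {p : ℝ}

/- `p * φ` lies strictly between `π / 2` and `π`, so for `|a| ≤ φ` the first term dominates and for
`|a| ≥ φ` the second one does. -/
lemma exists_one_le_mul_cos_rpow_sub_mul_cos (hp : 1 < p) (hp2 : p ≤ 2) :
    ∃ A > 0, ∃ B > 0, ∀ a : ℝ, |a| < Real.pi / 2 →
      1 ≤ A * Real.cos a ^ p - B * Real.cos (p * a) := by
  set φ := Real.pi * (p + 1) / (4 * p) with hφ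
  have hπ := Real.pi_pos
  have hp0 : 0 < p := by linarith
  have hφ0 : 0 < φ := by positivity
  have hpφ : p * φ = Real.pi * (p + 1) / 4 := by rw [hφ]; field_simp
  have hφπ : φ < Real.pi / 2 := by
    rw [hφ, div_lt_div_iff₀ (by positivity) (by positivity)]
    nlinarith
  set δ := Real.cos φ
  set κ := -Real.cos (p * φ) with hκ
  have hδ : 0 < δ := Real.cos_pos_of_mem_Ioo ⟨by linarith, hφπ⟩
  have hκ0 : 0 < κ := by
    rw [hκ, hpφ, neg_pos]
    apply Real.cos_neg_of_pi_div_two_lt_of_lt <;> nlinarith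
  refine ⟨(1 + κ⁻¹) / δ ^ p, by positivity, κ⁻¹, by positivity, fun a ha => ?_⟩
  have hcos : 0 < Real.cos a :=
    Real.cos_pos_of_mem_Ioo ⟨by linarith [(abs_lt.1 ha).1], (abs_lt.1 ha).2⟩
  rcases le_total |a| φ with h | h
  · have hδa : δ ≤ Real.cos a := by
      rw [← Real.cos_abs a]
      exact Real.cos_le_cos_of_nonneg_of_le_pi (abs_nonneg _) (by linarith) h
    have hfirst : 1 + κ⁻¹ ≤ (1 + κ⁻¹) / δ ^ p * Real.cos a ^ p := by
      rw [div_mul_eq_mul_div, le_div_iff₀ (by positivity)]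
      gcongr
    have hsecond : κ⁻¹ * Real.cos (p * a) ≤ κ⁻¹ :=
      mul_le_of_le_one_right (by positivity) (Real.cos_le_one _)
    linarith
  · have hpa : Real.cos (p * a) ≤ -κ := by
      rw [hκ, neg_neg, ← Real.cos_abs (p * a), abs_mul, abs_of_pos hp0]
      exact Real.cos_le_cos_of_nonneg_of_le_pi (by positivity) (by nlinarith) (by gcongr)
    have hsecond : κ⁻¹ * Real.cos (p * a) ≤ -1 := by
      rw [inv_mul_le_iff₀ hκ0]
      linarith
    have hfirst : 0 ≤ (1 + κ⁻¹) / δ ^ p * Real.cos a ^ p := by positivity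
    linarith

lemma exists_norm_rpow_le_re_rpow_sub_re_cpow (hp : 1 < p) (hp2 : p ≤ 2) :
    ∃ A > 0, ∃ B > 0, ∀ z : ℂ, 0 < z.re → ‖z‖ ^ p ≤ A * z.re ^ p - B * (z ^ (p : ℂ)).re := by
  obtain ⟨A, hA, B, hB, hAB⟩ := exists_one_le_mul_cos_rpow_sub_mul_cos hp hp2
  refine ⟨A, hA, B, hB, fun z hz => ?_⟩
  have harg : |z.arg| < Real.pi / 2 := Complex.abs_arg_lt_pi_div_two_iff.2 (Or.inl hz)
  have hcos : 0 ≤ Real.cos z.arg :=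
    (Real.cos_pos_of_mem_Ioo ⟨by linarith [(abs_lt.1 harg).1], (abs_lt.1 harg).2⟩).le
  rw [Complex.cpow_ofReal_re, mul_comm z.arg, ← Complex.norm_mul_cos_arg z,
    Real.mul_rpow (norm_nonneg z) hcos]
  linarith [mul_le_mul_of_nonneg_left (hAB z.arg harg) (Real.rpow_nonneg (norm_nonneg z) p)]

/- By the mean value property `(F ^ p).re` has mean `(F 0 ^ p).re = (F 0).re ^ p ≥ 0`, so that term
of the elementary inequality can be dropped after integration. -/
lemma exists_integral_norm_rpow_le_re (hp : 1 < p) (hp2 : p ≤ 2) :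
    ∃ A > 0, ∀ F : ℂ → ℂ, DifferentiableOn ℂ F (ball 0 1) → (∀ z ∈ ball (0 : ℂ) 1, 0 < (F z).re) →
      (F 0).im = 0 → ∀ r ∈ Ico (0 : ℝ) 1,
      ∫ θ, ‖F (circleMap 0 r θ)‖ ^ p ∂angleMeasure ≤
        A * ∫ θ, (F (circleMap 0 r θ)).re ^ p ∂angleMeasure := by
  obtain ⟨A, hA, B, hB, hAB⟩ := exists_norm_rpow_le_re_rpow_sub_re_cpow hp hp2
  refine ⟨A, hA, fun F hF hre him r hr => ?_⟩
  have hmem := circleMap_mem_unitBall hr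
  have hc : Continuous fun θ => F (circleMap 0 r θ) :=
    hF.continuousOn.comp_continuous (continuous_circleMap 0 r) hmem
  have hp0 : 0 ≤ p := by linarith
  have hnorm := integrable_angleMeasure_of_continuous (hc.norm.rpow_const fun _ => Or.inr hp0)
  have hrei : Integrable (fun θ => (F (circleMap 0 r θ)).re ^ p) angleMeasure :=
    integrable_angleMeasure_of_continuous
      ((Complex.continuous_re.comp hc).rpow_const fun _ => Or.inr hp0)
  have hcpow := integrable_angleMeasure_of_continuous
    (hc.cpow continuous_const fun θ => Or.inl (hre _ (hmem θ)) : Continuous fun θ =>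
      F (circleMap 0 r θ) ^ (p : ℂ))
  have hcpow_re : Integrable (fun θ => (F (circleMap 0 r θ) ^ (p : ℂ)).re) angleMeasure := hcpow.re
  have hmean : 0 ≤ ∫ θ, (F (circleMap 0 r θ) ^ (p : ℂ)).re ∂angleMeasure := by
    have h0 : F 0 = ((F 0).re : ℂ) := Complex.ext rfl (by simpa using him)
    have hmv := integral_angleMeasure_circleMap
      (hF.cpow_const (c := (p : ℂ)) fun z hz => Or.inl (hre z hz)) hr
    have hre_int := integral_re (𝕜 := ℂ) hcpow
    simp only [RCLike.re_eq_complex_re] at hre_int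
    rw [hre_int, hmv, h0, ← Complex.ofReal_cpow (hre 0 (by simp)).le, Complex.ofReal_re]
    exact Real.rpow_nonneg (hre 0 (by simp)).le p
  calc ∫ θ, ‖F (circleMap 0 r θ)‖ ^ p ∂angleMeasure
      ≤ ∫ θ, (A * (F (circleMap 0 r θ)).re ^ p - B * (F (circleMap 0 r θ) ^ (p : ℂ)).re)
          ∂angleMeasure :=
        integral_mono hnorm ((hrei.const_mul A).sub (hcpow_re.const_mul B))
          fun θ => hAB _ (hre _ (hmem θ))
    _ = A * ∫ θ, (F (circleMap 0 r θ)).re ^ p ∂angleMeasure -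
          B * ∫ θ, (F (circleMap 0 r θ) ^ (p : ℂ)).re ∂angleMeasure := by
        rw [integral_sub (hrei.const_mul A) (hcpow_re.const_mul B), integral_const_mul,
          integral_const_mul]
    _ ≤ _ := sub_le_self _ (by positivity)

/-- The Cauchy kernel of the unit disc, whose convolution operator is the Cauchy transform. -/
def cauchyKernel (x : ℂ) : ℂ := (1 - x)⁻¹

lemma one_sub_ne_zero_of_mem_unitBall {x : ℂ} (hx : x ∈ ball (0 : ℂ) 1) : 1 - x ≠ 0 :=
  sub_ne_zero.2 fun h => by simp [← h] at hx

lemma differentiableOn_cauchyKernel : DifferentiableOn ℂ cauchyKernel (ball 0 1) :=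
  ((differentiableOn_const _).sub differentiableOn_id).inv
    fun _ => one_sub_ne_zero_of_mem_unitBall

lemma re_cauchyKernel_pos {x : ℂ} (hx : x ∈ ball (0 : ℂ) 1) : 0 < (cauchyKernel x).re := by
  have hx1 : x.re < 1 := (Complex.re_le_norm x).trans_lt (by simpa using hx)
  rw [cauchyKernel, Complex.inv_re]
  exact div_pos (by simpa using hx1)
    (Complex.normSq_pos.2 (one_sub_ne_zero_of_mem_unitBall hx))

lemma cauchyKernel_conj (x : ℂ) :
    cauchyKernel ((starRingEnd ℂ) x) = (starRingEnd ℂ) (cauchyKernel x) := by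
  simp [cauchyKernel]

lemma lintegral_re_cauchyKernel {r : ℝ} (hr : r ∈ Ico (0 : ℝ) 1) (t : ℝ) :
    ∫⁻ θ, ENNReal.ofReal (cauchyKernel (circleMap 0 r (θ - t))).re ∂angleMeasure = 1 := by
  have hmem (θ : ℝ) := circleMap_mem_unitBall hr (θ - t)
  have hint : Integrable (fun θ => cauchyKernel (circleMap 0 r (θ - t))) angleMeasure :=
    integrable_angleMeasure_of_continuous
      (differentiableOn_cauchyKernel.continuousOn.comp_continuous (by fun_prop) hmem)
  have hre_int := integral_re (𝕜 := ℂ) hint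
  have hmv := integral_angleMeasure_circleMap (H := fun z => cauchyKernel (z * circleMap 0 1 (-t)))
    (differentiableOn_cauchyKernel.comp (by fun_prop)
      fun z hz => mul_circleMap_mem_unitBall hz _) hr
  simp only [RCLike.re_eq_complex_re] at hre_int
  simp only [circleMap_mul_circleMap_neg, zero_mul] at hmv
  have hint_re : Integrable (fun θ => (cauchyKernel (circleMap 0 r (θ - t))).re) angleMeasure :=
    hint.re
  rw [← ofReal_integral_eq_lintegral_ofReal hint_re
    (.of_forall fun θ => (re_cauchyKernel_pos (hmem θ)).le)]
  rw [hre_int, hmv]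
  simp [cauchyKernel]

end CauchyKernel

section LpDuality

variable {X : Type*} {p q : ℝ}

/-- The function `F * ‖F‖ ^ (p - 2)`, which attains the duality between `L^p` and `L^q` at `F`. -/
def dualFunction (p : ℝ) (F : X → ℂ) (x : X) : ℂ :=
  ((‖F x‖ ^ (p - 2) : ℝ) : ℂ) * F x

lemma norm_dualFunction (hp : 1 < p) (F : X → ℂ) (x : X) :
    ‖dualFunction p F x‖ = ‖F x‖ ^ (p - 1) := by
  rw [dualFunction, norm_mul, Complex.norm_real, Real.norm_of_nonneg (by positivity)]
  rcases (norm_nonneg (F x)).eq_or_lt with h0 | h0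
  · rw [← h0, mul_zero, Real.zero_rpow (sub_pos.2 hp).ne']
  · rw [← Real.rpow_add_one h0.ne']
    congr 1
    ring

lemma mul_conj_dualFunction (hp : 0 < p) (F : X → ℂ) (x : X) :
    F x * (starRingEnd ℂ) (dualFunction p F x) = ((‖F x‖ ^ p : ℝ) : ℂ) := by
  rw [dualFunction, map_mul, Complex.conj_ofReal, mul_left_comm, Complex.mul_conj,
    Complex.normSq_eq_norm_sq, ← Complex.ofReal_mul]
  rcases (norm_nonneg (F x)).eq_or_lt with h0 | h0
  · simp [← h0, Real.zero_rpow hp.ne']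
  · rw [← Real.rpow_two, ← Real.rpow_add h0, sub_add_cancel]

variable [MeasurableSpace X] {μ : Measure X}

lemma eLpNorm_ofReal_rpow {E : Type*} [ENorm E] (hp : 0 < p) (f : X → E) :
    eLpNorm f (ENNReal.ofReal p) μ ^ p = ∫⁻ x, ‖f x‖ₑ ^ p ∂μ := by
  rw [eLpNorm_eq_lintegral_rpow_enorm_toReal (ENNReal.ofReal_pos.2 hp).ne' ENNReal.ofReal_ne_top,
    ENNReal.toReal_ofReal hp.le, ← ENNReal.rpow_mul, one_div_mul_cancel hp.ne', ENNReal.rpow_one]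

lemma eLpNorm_ofReal_rpow_eq_ofReal_integral {E : Type*} [NormedAddCommGroup E] (hp : 0 < p)
    {F : X → E} (hF : MemLp F (ENNReal.ofReal p) μ) :
    eLpNorm F (ENNReal.ofReal p) μ ^ p = ENNReal.ofReal (∫ x, ‖F x‖ ^ p ∂μ) := by
  have hint : Integrable (fun x => ‖F x‖ ^ p) μ := by
    simpa [ENNReal.toReal_ofReal hp.le] using
      hF.integrable_norm_rpow (ENNReal.ofReal_pos.2 hp).ne' ENNReal.ofReal_ne_top
  rw [ofReal_integral_eq_lintegral_ofReal hint (.of_forall fun x => by positivity),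
    eLpNorm_ofReal_rpow hp]
  simp_rw [← ENNReal.ofReal_rpow_of_nonneg (norm_nonneg _) hp.le, ofReal_norm]

theorem enorm_integral_mul_conj_le (hpq : p.HolderConjugate q) {F G : X → ℂ}
    (hF : AEStronglyMeasurable F μ) (hG : AEStronglyMeasurable G μ) :
    ‖∫ x, F x * (starRingEnd ℂ) (G x) ∂μ‖ₑ ≤
      eLpNorm F (ENNReal.ofReal p) μ * eLpNorm G (ENNReal.ofReal q) μ := by
  refine (enorm_integral_le_lintegral_enorm _).trans ?_
  rw [← ENNReal.rpow_rpow_inv hpq.ne_zero (eLpNorm F _ μ),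
    ← ENNReal.rpow_rpow_inv hpq.symm.ne_zero (eLpNorm G _ μ), eLpNorm_ofReal_rpow hpq.pos,
    eLpNorm_ofReal_rpow hpq.symm.pos, ← one_div, ← one_div]
  simpa [enorm_mul, ← ofReal_norm] using
    ENNReal.lintegral_mul_le_Lp_mul_Lq μ hpq hF.enorm hG.enorm

lemma eLpNorm_dualFunction (hpq : p.HolderConjugate q) (F : X → ℂ) :
    eLpNorm (dualFunction p F) (ENNReal.ofReal q) μ =
      eLpNorm F (ENNReal.ofReal p) μ ^ (p - 1) := by
  rw [eLpNorm_congr_norm_ae (g := fun x => ‖F x‖ ^ (p - 1))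
    (.of_forall fun x => by rw [norm_dualFunction hpq.lt, Real.norm_of_nonneg (by positivity)]),
    eLpNorm_norm_rpow _ (sub_pos.2 hpq.lt), ← ENNReal.ofReal_mul hpq.symm.nonneg, mul_comm,
    hpq.sub_one_mul_conj]

theorem eLpNorm_le_of_forall_pairing (hpq : p.HolderConjugate q) {F : X → ℂ}
    (hF : MemLp F (ENNReal.ofReal p) μ) {D : ℝ≥0∞}
    (h : ∀ G : X → ℂ, MemLp G (ENNReal.ofReal q) μ →
      ‖∫ x, F x * (starRingEnd ℂ) (G x) ∂μ‖ₑ ≤ D * eLpNorm G (ENNReal.ofReal q) μ) :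
    eLpNorm F (ENNReal.ofReal p) μ ≤ D := by
  have hp0 := hpq.pos
  have hp1 : 0 < p - 1 := sub_pos.2 hpq.lt
  have hGm : AEStronglyMeasurable (dualFunction p F) μ :=
    (Complex.continuous_ofReal.comp_aestronglyMeasurable
      (hF.1.norm.aemeasurable.pow_const _).aestronglyMeasurable).mul hF.1
  have hG : MemLp (dualFunction p F) (ENNReal.ofReal q) μ :=
    ⟨hGm, by rw [eLpNorm_dualFunction hpq]; exact ENNReal.rpow_lt_top_of_nonneg hp1.le hF.2.ne⟩
  have hkey := h _ hG
  simp_rw [mul_conj_dualFunction hp0] at hkey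
  rw [integral_complex_ofReal, ← ofReal_norm, Complex.norm_real,
    Real.norm_of_nonneg (integral_nonneg fun x => by positivity),
    ← eLpNorm_ofReal_rpow_eq_ofReal_integral hp0 hF, eLpNorm_dualFunction hpq] at hkey
  rcases eq_or_ne (eLpNorm F (ENNReal.ofReal p) μ) 0 with h0 | h0
  · simp [h0]
  rw [← ennreal_rpow_sub_one_mul_self hpq.lt.le, mul_comm] at hkey
  exact (ENNReal.mul_le_mul_iff_left (by simp [h0, hF.2.ne, hp1])
    (ENNReal.rpow_ne_top_of_nonneg hp1.le hF.2.ne)).1 hkey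

end LpDuality

section RieszTheorem

variable {k : ℂ → ℂ} {p q : ℝ}

lemma memLp_circleConv_circleMap (hk : DifferentiableOn ℂ k (ball 0 1)) {g : ℝ → ℂ}
    (hg : Integrable g angleMeasure) {r : ℝ} (hr : r ∈ Ico (0 : ℝ) 1) (P : ℝ≥0∞) :
    MemLp (fun θ => circleConv k g (circleMap 0 r θ)) P angleMeasure :=
  memLp_angleMeasure_of_continuous (continuous_circleConv_circleMap hk hg hr) P

lemma integral_circleConv_mul_conj (hk : DifferentiableOn ℂ k (ball 0 1))
    (hconj : ∀ x, k ((starRingEnd ℂ) x) = (starRingEnd ℂ) (k x)) {g h : ℝ → ℂ}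
    (hg : Integrable g angleMeasure) (hh : Integrable h angleMeasure) {r : ℝ}
    (hr : r ∈ Ico (0 : ℝ) 1) :
    ∫ θ, circleConv k g (circleMap 0 r θ) * (starRingEnd ℂ) (h θ) ∂angleMeasure =
      ∫ t, g t * (starRingEnd ℂ) (circleConv k h (circleMap 0 r t)) ∂angleMeasure := by
  have hswap (θ t : ℝ) : (starRingEnd ℂ) (k (circleMap 0 r (t - θ))) =
      k (circleMap 0 r (θ - t)) := by
    rw [← hconj, conj_circleMap_zero, neg_sub]
  have hkc : Continuous fun x : ℝ × ℝ => k (circleMap 0 r (x.1 - x.2)) :=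
    hk.continuousOn.comp_continuous (by fun_prop) fun x => circleMap_mem_unitBall hr _
  obtain ⟨C, hC⟩ := (isCompact_closedBall (0 : ℂ) r).exists_bound_of_continuousOn
    (hk.continuousOn.mono (closedBall_subset_ball hr.2))
  have hint : Integrable (fun x : ℝ × ℝ =>
      (starRingEnd ℂ) (h x.1) * g x.2 * k (circleMap 0 r (x.1 - x.2)))
      (angleMeasure.prod angleMeasure) :=
    (Integrable.mul_prod (f := fun θ => (starRingEnd ℂ) (h θ))
      ((LinearIsometryEquiv.integrable_comp_iff Complex.conjLIE).2 hh) hg).mul_bdd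
      hkc.aestronglyMeasurable (c := C) (.of_forall fun x => hC _ (by simp [abs_of_nonneg hr.1]))
  calc ∫ θ, circleConv k g (circleMap 0 r θ) * (starRingEnd ℂ) (h θ) ∂angleMeasure
      = ∫ θ, ∫ t, (starRingEnd ℂ) (h θ) * g t * k (circleMap 0 r (θ - t))
          ∂angleMeasure ∂angleMeasure := by
        simp only [circleConv, circleMap_mul_circleMap_neg, mul_comm _ ((starRingEnd ℂ) (h _)),
          ← integral_const_mul, mul_assoc]
    _ = ∫ t, ∫ θ, (starRingEnd ℂ) (h θ) * g t * k (circleMap 0 r (θ - t))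
          ∂angleMeasure ∂angleMeasure := integral_integral_swap hint
    _ = _ := by
        simp only [circleConv, circleMap_mul_circleMap_neg, ← integral_conj, map_mul, hswap,
          ← integral_const_mul, mul_left_comm (g _), mul_assoc]

theorem CircleConvBound.dual {C : ℝ≥0} (hpq : p.HolderConjugate q)
    (hk : DifferentiableOn ℂ k (ball 0 1))
    (hconj : ∀ x, k ((starRingEnd ℂ) x) = (starRingEnd ℂ) (k x))
    (h : CircleConvBound (ENNReal.ofReal q) k C) : CircleConvBound (ENNReal.ofReal p) k C := by
  intro g hg r hr
  have hgi := hg.integrable (ENNReal.one_le_ofReal.2 hpq.lt.le)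
  refine eLpNorm_le_of_forall_pairing hpq (memLp_circleConv_circleMap hk hgi hr _) fun G hG => ?_
  have hGi := hG.integrable (ENNReal.one_le_ofReal.2 hpq.symm.lt.le)
  calc ‖∫ θ, circleConv k g (circleMap 0 r θ) * (starRingEnd ℂ) (G θ) ∂angleMeasure‖ₑ
      = ‖∫ t, g t * (starRingEnd ℂ) (circleConv k G (circleMap 0 r t)) ∂angleMeasure‖ₑ := by
        rw [integral_circleConv_mul_conj hk hconj hgi hGi hr]
    _ ≤ eLpNorm g (ENNReal.ofReal p) angleMeasure *
          eLpNorm (fun t => circleConv k G (circleMap 0 r t)) (ENNReal.ofReal q) angleMeasure :=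
        enorm_integral_mul_conj_le hpq hg.1 (memLp_circleConv_circleMap hk hGi hr 1).1
    _ ≤ eLpNorm g (ENNReal.ofReal p) angleMeasure *
          (C * eLpNorm G (ENNReal.ofReal q) angleMeasure) := by gcongr; exact h G hG r hr
    _ = C * eLpNorm g (ENNReal.ofReal p) angleMeasure *
          eLpNorm G (ENNReal.ofReal q) angleMeasure := by ring

lemma eLpNorm_circleConv_add_mul_le (hk : DifferentiableOn ℂ k (ball 0 1)) {P : ℝ≥0∞}
    (hP : 1 ≤ P) {g g₁ g₂ : ℝ → ℂ} {c : ℂ} (hc : ‖c‖ = 1) (hg : ∀ t, g t = g₁ t + c * g₂ t)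
    (hg₁ : MemLp g₁ P angleMeasure) (hg₂ : MemLp g₂ P angleMeasure)
    (hle₁ : ∀ t, ‖g₁ t‖ ≤ ‖g t‖) (hle₂ : ∀ t, ‖g₂ t‖ ≤ ‖g t‖) {r : ℝ} (hr : r ∈ Ico (0 : ℝ) 1)
    {C : ℝ≥0}
    (hC₁ : eLpNorm (fun θ => circleConv k g₁ (circleMap 0 r θ)) P angleMeasure ≤
      C * eLpNorm g₁ P angleMeasure)
    (hC₂ : eLpNorm (fun θ => circleConv k g₂ (circleMap 0 r θ)) P angleMeasure ≤
      C * eLpNorm g₂ P angleMeasure) :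
    eLpNorm (fun θ => circleConv k g (circleMap 0 r θ)) P angleMeasure ≤
      (2 * C : ℝ≥0) * eLpNorm g P angleMeasure := by
  have hi₁ := hg₁.integrable hP
  have hi₂ := hg₂.integrable hP
  have hsplit : (fun θ => circleConv k g (circleMap 0 r θ)) =
      (fun θ => circleConv k g₁ (circleMap 0 r θ)) +
        c • fun θ => circleConv k g₂ (circleMap 0 r θ) := by
    ext θ
    rw [funext hg, circleConv_add hk.continuousOn hi₁ (hi₂.const_mul c)
      (circleMap_mem_unitBall hr θ), circleConv_const_mul]
    rfl
  have hm₂ := (memLp_circleConv_circleMap hk hi₂ hr P).1.const_smul c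
  rw [hsplit]
  calc _ ≤ eLpNorm (fun θ => circleConv k g₁ (circleMap 0 r θ)) P angleMeasure +
          eLpNorm (fun θ => circleConv k g₂ (circleMap 0 r θ)) P angleMeasure := by
        refine (eLpNorm_add_le (memLp_circleConv_circleMap hk hi₁ hr P).1 hm₂ hP).trans_eq ?_
        rw [eLpNorm_const_smul, ← ofReal_norm, hc, ENNReal.ofReal_one, one_mul]
    _ ≤ C * eLpNorm g P angleMeasure + C * eLpNorm g P angleMeasure := by
        refine add_le_add (hC₁.trans ?_) (hC₂.trans ?_) <;> gcongr 1
        exacts [eLpNorm_mono hle₁, eLpNorm_mono hle₂]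
    _ = _ := by push_cast; ring

theorem circleConvBound_of_nonneg (hk : DifferentiableOn ℂ k (ball 0 1)) {P : ℝ≥0∞} (hP : 1 ≤ P)
    {C : ℝ≥0} (h : ∀ g : ℝ → ℝ, (∀ t, 0 ≤ g t) → MemLp g P angleMeasure → ∀ r ∈ Ico (0 : ℝ) 1,
      eLpNorm (fun θ => circleConv k (fun t => (g t : ℂ)) (circleMap 0 r θ)) P angleMeasure ≤
        C * eLpNorm (fun t => (g t : ℂ)) P angleMeasure) :
    CircleConvBound P k (2 * (2 * C)) := by
  have hreal (g : ℝ → ℝ) (hg : MemLp g P angleMeasure) (r : ℝ) (hr : r ∈ Ico (0 : ℝ) 1) :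
      eLpNorm (fun θ => circleConv k (fun t => (g t : ℂ)) (circleMap 0 r θ)) P angleMeasure ≤
        (2 * C : ℝ≥0) * eLpNorm (fun t => (g t : ℂ)) P angleMeasure := by
    refine eLpNorm_circleConv_add_mul_le hk hP (c := -1)
      (g₁ := fun t => ((max (g t) 0 : ℝ) : ℂ)) (g₂ := fun t => ((max (-g t) 0 : ℝ) : ℂ)) (by simp)
      (fun t => ?_) hg.pos_part.ofReal hg.neg_part.ofReal (fun t => ?_) (fun t => ?_) hr
      (h _ (fun t => le_max_right _ _) hg.pos_part r hr)
      (h _ (fun t => le_max_right _ _) hg.neg_part r hr)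
    · rw [neg_one_mul, ← sub_eq_add_neg]
      exact_mod_cast (max_zero_sub_eq_self (g t)).symm
    · simpa [Complex.norm_real, abs_of_nonneg] using le_abs_self (g t)
    · simpa [Complex.norm_real, abs_of_nonneg] using neg_le_abs (g t)
  intro g hg r hr
  refine eLpNorm_circleConv_add_mul_le hk hP Complex.norm_I (fun t => ?_) hg.re.ofReal hg.im.ofReal
    (fun t => ?_) (fun t => ?_) hr (hreal _ hg.re r hr) (hreal _ hg.im r hr)
  · simpa [mul_comm] using (Complex.re_add_im (g t)).symm
  · simpa [Complex.norm_real] using Complex.abs_re_le_norm (g t)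
  · simpa [Complex.norm_real] using Complex.abs_im_le_norm (g t)

lemma eLpNorm_re_circleConv_cauchyKernel_le (hp : 1 < p) {g : ℝ → ℝ}
    (hg : MemLp g (ENNReal.ofReal p) angleMeasure) {r : ℝ} (hr : r ∈ Ico (0 : ℝ) 1) :
    eLpNorm (fun θ => (circleConv cauchyKernel (fun t => (g t : ℂ)) (circleMap 0 r θ)).re)
      (ENNReal.ofReal p) angleMeasure ≤ eLpNorm g (ENNReal.ofReal p) angleMeasure := by
  have hp0 : 0 < p := by linarith
  set K : ℝ → ℝ → ℝ≥0∞ := fun θ t => ENNReal.ofReal (cauchyKernel (circleMap 0 r (θ - t))).re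
    with hK
  have hKm : Measurable (Function.uncurry K) :=
    (Complex.continuous_re.comp (differentiableOn_cauchyKernel.continuousOn.comp_continuous
      (f := fun x : ℝ × ℝ => circleMap 0 r (x.1 - x.2)) (by fun_prop)
      fun x => circleMap_mem_unitBall hr _)).measurable.ennreal_ofReal
  have hsymm (θ t : ℝ) : K θ t = K t θ := by
    simp only [hK, ← neg_sub t θ, ← conj_circleMap_zero, cauchyKernel_conj, Complex.conj_re]
  have hpoint (θ : ℝ) :
      ‖(circleConv cauchyKernel (fun t => (g t : ℂ)) (circleMap 0 r θ)).re‖ₑ ≤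
        ∫⁻ t, K θ t * ‖g t‖ₑ ∂angleMeasure := by
    rw [re_circleConv_ofReal differentiableOn_cauchyKernel.continuousOn
      (hg.integrable (ENNReal.one_le_ofReal.2 hp.le)) (circleMap_mem_unitBall hr θ)]
    refine (enorm_integral_le_lintegral_enorm _).trans_eq (lintegral_congr fun t => ?_)
    rw [circleMap_mul_circleMap_neg, enorm_mul, mul_comm,
      Real.enorm_of_nonneg (re_cauchyKernel_pos (circleMap_mem_unitBall hr _)).le]
  have hKθ (t : ℝ) : ∫⁻ θ, K θ t ∂angleMeasure = 1 := lintegral_re_cauchyKernel hr t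
  have hKt (θ : ℝ) : ∫⁻ t, K θ t ∂angleMeasure = 1 := by
    simp_rw [hsymm θ]
    exact hKθ θ
  have hschur := lintegral_mul_rpow_kernel_le (μ := angleMeasure) (ν := angleMeasure) hp hKm
    (u := fun _ => 1) (φ := fun _ => 1) (v := fun _ => 1) (ψ := fun _ => 1) (A := 1) (B := 1)
    measurable_const measurable_const measurable_const hg.1.enorm (by simp) (by simp)
    (.of_forall fun θ => by simp [hKt]) (.of_forall fun t => by simp [hKθ])
  rw [← ENNReal.rpow_le_rpow_iff hp0, eLpNorm_ofReal_rpow hp0, eLpNorm_ofReal_rpow hp0]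
  refine (lintegral_mono fun θ => ENNReal.rpow_le_rpow (hpoint θ) hp0.le).trans ?_
  simpa using hschur

lemma exists_eLpNorm_le_eLpNorm_re (hp : 1 < p) (hp2 : p ≤ 2) :
    ∃ C : ℝ≥0, ∀ F : ℂ → ℂ, DifferentiableOn ℂ F (ball 0 1) →
      (∀ z ∈ ball (0 : ℂ) 1, 0 < (F z).re) → (F 0).im = 0 → ∀ r ∈ Ico (0 : ℝ) 1,
      eLpNorm (fun θ => F (circleMap 0 r θ)) (ENNReal.ofReal p) angleMeasure ≤
        C * eLpNorm (fun θ => (F (circleMap 0 r θ)).re) (ENNReal.ofReal p) angleMeasure := by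
  obtain ⟨A, hA, hAF⟩ := exists_integral_norm_rpow_le_re hp hp2
  have hp0 : 0 < p := by linarith
  refine ⟨(A ^ p⁻¹).toNNReal, fun F hF hre him r hr => ?_⟩
  have hc : Continuous fun θ => F (circleMap 0 r θ) :=
    hF.continuousOn.comp_continuous (continuous_circleMap 0 r) (circleMap_mem_unitBall hr)
  have hcre : Continuous fun θ => (F (circleMap 0 r θ)).re := Complex.continuous_re.comp hc
  have hCp : ((A ^ p⁻¹).toNNReal : ℝ≥0∞) ^ p = ENNReal.ofReal A := by
    rw [ENNReal.ofNNReal_toNNReal, ENNReal.ofReal_rpow_of_nonneg (by positivity) hp0.le,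
      Real.rpow_inv_rpow hA.le hp0.ne']
  rw [← ENNReal.rpow_le_rpow_iff hp0, ENNReal.mul_rpow_of_nonneg _ _ hp0.le, hCp,
    eLpNorm_ofReal_rpow_eq_ofReal_integral hp0 (memLp_angleMeasure_of_continuous hc _),
    eLpNorm_ofReal_rpow_eq_ofReal_integral hp0 (memLp_angleMeasure_of_continuous hcre _),
    ← ENNReal.ofReal_mul hA.le]
  refine ENNReal.ofReal_le_ofReal ((hAF F hF hre him r hr).trans_eq ?_)
  simp_rw [Real.norm_of_nonneg (hre _ (circleMap_mem_unitBall hr _)).le]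

lemma re_circleConv_cauchyKernel_pos {g : ℝ → ℝ} (hg0 : ∀ t, 0 ≤ g t)
    (hg : Integrable g angleMeasure) (hne : ¬g =ᵐ[angleMeasure] 0) {z : ℂ}
    (hz : z ∈ ball (0 : ℂ) 1) : 0 < (circleConv cauchyKernel (fun t => (g t : ℂ)) z).re := by
  have hkc := differentiableOn_cauchyKernel.continuousOn
  have hpos (t : ℝ) := re_cauchyKernel_pos (mul_circleMap_mem_unitBall hz (-t))
  have hnn : ∀ t, 0 ≤ g t * (cauchyKernel (z * circleMap 0 1 (-t))).re :=
    fun t => mul_nonneg (hg0 t) (hpos t).le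
  have hgc : Integrable (fun t => (g t : ℂ)) angleMeasure := hg.ofReal
  have hint : Integrable (fun t => g t * (cauchyKernel (z * circleMap 0 1 (-t))).re)
      angleMeasure := by
    simpa using (integrable_mul_kernel hkc hgc hz).re
  rw [re_circleConv_ofReal hkc hg hz]
  refine (integral_nonneg hnn).lt_of_ne' fun h0 => hne ?_
  filter_upwards [(integral_eq_zero_iff_of_nonneg hnn hint).1 h0] with t ht
  exact (mul_eq_zero.1 ht).resolve_right (hpos t).ne'

lemma exists_eLpNorm_circleConv_cauchyKernel_le (hp : 1 < p) (hp2 : p ≤ 2) :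
    ∃ C : ℝ≥0, ∀ g : ℝ → ℝ, (∀ t, 0 ≤ g t) → MemLp g (ENNReal.ofReal p) angleMeasure →
      ∀ r ∈ Ico (0 : ℝ) 1,
      eLpNorm (fun θ => circleConv cauchyKernel (fun t => (g t : ℂ)) (circleMap 0 r θ))
        (ENNReal.ofReal p) angleMeasure ≤
        C * eLpNorm (fun t => (g t : ℂ)) (ENNReal.ofReal p) angleMeasure := by
  obtain ⟨C, hC⟩ := exists_eLpNorm_le_eLpNorm_re hp hp2
  refine ⟨C, fun g hg0 hg r hr => ?_⟩
  have hgi := hg.integrable (ENNReal.one_le_ofReal.2 hp.le)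
  have hgc : Integrable (fun t => (g t : ℂ)) angleMeasure := hgi.ofReal
  by_cases hzero : g =ᵐ[angleMeasure] 0
  · have hconv (z : ℂ) : circleConv cauchyKernel (fun t => (g t : ℂ)) z = 0 := by
      refine integral_eq_zero_of_ae ?_
      filter_upwards [hzero] with t ht
      simp [ht]
    simp [hconv]
  have him : (circleConv cauchyKernel (fun t => (g t : ℂ)) 0).im = 0 := by
    simp [circleConv, cauchyKernel, integral_complex_ofReal]
  refine (hC _ (differentiableOn_circleConv differentiableOn_cauchyKernel hgc)
    (fun z => re_circleConv_cauchyKernel_pos hg0 hgi hzero) him r hr).trans ?_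
  gcongr 1
  refine (eLpNorm_re_circleConv_cauchyKernel_le hp hg hr).trans_eq ?_
  exact eLpNorm_congr_norm_ae (.of_forall fun t => (Complex.norm_real _).symm)

/-- M. Riesz's theorem; the exponents `p ≥ 2` are reached by duality. -/
theorem exists_circleConvBound_cauchyKernel (hp : 1 < p) :
    ∃ C : ℝ≥0, CircleConvBound (ENNReal.ofReal p) cauchyKernel C := by
  have hsmall {s : ℝ} (hs : 1 < s) (hs2 : s ≤ 2) :
      ∃ C : ℝ≥0, CircleConvBound (ENNReal.ofReal s) cauchyKernel C := by
    obtain ⟨C, hC⟩ := exists_eLpNorm_circleConv_cauchyKernel_le hs hs2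
    exact ⟨_, circleConvBound_of_nonneg differentiableOn_cauchyKernel
      (ENNReal.one_le_ofReal.2 hs.le) hC⟩
  rcases le_total p 2 with hp2 | hp2
  · exact hsmall hp hp2
  · have hpq := Real.HolderConjugate.conjExponent hp
    obtain ⟨C, hC⟩ := hsmall hpq.symm.lt (by
      rw [Real.conjExponent, div_le_iff₀ (by linarith)]
      linarith)
    exact ⟨C, hC.dual hpq differentiableOn_cauchyKernel cauchyKernel_conj⟩

end RieszTheorem

section Multipliers

lemma eLpNorm_le_tsum_eLpNorm {X E : Type*} [MeasurableSpace X] {μ : Measure X}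
    [NormedAddCommGroup E] {P : ℝ≥0∞} (hP : 1 ≤ P) {f : ℕ → X → E} {F : X → E}
    (hf : ∀ n, AEStronglyMeasurable (f n) μ) (hF : ∀ᵐ x ∂μ, HasSum (fun n => f n x) (F x)) :
    eLpNorm F P μ ≤ ∑' n, eLpNorm (f n) P μ := by
  have hlim : ∀ᵐ x ∂μ, Filter.Tendsto (fun N => (∑ n ∈ Finset.range N, f n) x) Filter.atTop
      (nhds (F x)) := by
    filter_upwards [hF] with x hx
    simpa only [Finset.sum_apply] using hx.tendsto_sum_nat
  refine (Lp.eLpNorm_lim_le_liminf_eLpNorm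
    (fun N => Finset.aestronglyMeasurable_sum _ fun n _ => hf n) F hlim).trans ?_
  refine Filter.liminf_le_of_le (by isBoundedDefault) fun b hb => ?_
  obtain ⟨N, hN⟩ := hb.exists
  exact hN.trans ((eLpNorm_sum_le (fun n _ => hf n) hP).trans (ENNReal.sum_le_tsum _))

variable {k : ℂ → ℂ} {g : ℝ → ℂ} {d : ℕ → ℂ} {z : ℂ}

lemma CircleConvBound.congr {P : ℝ≥0∞} {k' : ℂ → ℂ} {C : ℝ≥0} (h : CircleConvBound P k C)
    (hk : EqOn k k' (ball 0 1)) : CircleConvBound P k' C := by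
  intro g hg r hr
  have hconv (θ : ℝ) : circleConv k' g (circleMap 0 r θ) = circleConv k g (circleMap 0 r θ) := by
    simp only [circleConv,
      fun t => hk (mul_circleMap_mem_unitBall (circleMap_mem_unitBall hr θ) (-t))]
  simpa only [hconv] using h g hg r hr

lemma hasSum_circleConv_tsum_mul (hk : ContinuousOn k (ball 0 1)) (hg : Integrable g angleMeasure)
    (hd : Summable fun n => ‖d n‖) (hz : z ∈ ball (0 : ℂ) 1) :
    HasSum (fun n => d n * z ^ n * circleConv k (fun t => g t * circleMap 0 1 (-t) ^ n) z)
      (circleConv (fun x => (∑' n, d n * x ^ n) * k x) g z) := by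
  have hgk := integrable_mul_kernel hk hg hz
  have hbd (n : ℕ) (t : ℝ) : ‖d n * (z * circleMap 0 1 (-t)) ^ n‖ ≤ ‖d n‖ := by
    rw [norm_mul, norm_pow]
    exact mul_le_of_le_one_right (norm_nonneg _) (pow_le_one₀ (norm_nonneg _)
      (mem_ball_zero_iff.1 (mul_circleMap_mem_unitBall hz _)).le)
  have hsum : HasSum
      (fun n => ∫ t, d n * (z * circleMap 0 1 (-t)) ^ n * (g t * k (z * circleMap 0 1 (-t)))
        ∂angleMeasure)
      (∫ t, g t * ((∑' n, d n * (z * circleMap 0 1 (-t)) ^ n) * k (z * circleMap 0 1 (-t)))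
        ∂angleMeasure) := by
    refine hasSum_integral_of_dominated_convergence
      (fun n t => ‖d n‖ * ‖g t * k (z * circleMap 0 1 (-t))‖) (fun n => ?_)
      (fun n => .of_forall fun t => ?_) (.of_forall fun t => hd.mul_right _) ?_
      (.of_forall fun t => ?_)
    · exact (by fun_prop : Continuous fun t : ℝ => d n * (z * circleMap 0 1 (-t)) ^ n)
        |>.aestronglyMeasurable.mul hgk.aestronglyMeasurable
    · rw [norm_mul]
      gcongr
      exact hbd n t
    · simpa only [tsum_mul_right] using hgk.norm.const_mul (∑' n, ‖d n‖)
    · rw [mul_left_comm]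
      exact (Summable.of_norm_bounded hd fun n => hbd n t).hasSum.mul_right _
  refine hsum.congr_fun fun n => ?_
  rw [circleConv, ← integral_const_mul]
  congr 1 with t
  ring

theorem CircleConvBound.tsum_mul {P : ℝ≥0∞} (hP : 1 ≤ P) (hkd : DifferentiableOn ℂ k (ball 0 1))
    {C S : ℝ≥0} (hk : CircleConvBound P k C) (hd : ∑' n, ‖d n‖ₑ ≤ S) :
    CircleConvBound P (fun x => (∑' n, d n * x ^ n) * k x) (C * S) := by
  intro g hg r hr
  have hgi := hg.integrable hP
  have hds : Summable fun n => ‖d n‖ := NNReal.summable_coe.2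
    (ENNReal.tsum_coe_ne_top_iff_summable.1 (ne_top_of_le_ne_top ENNReal.coe_ne_top hd))
  set G : ℕ → ℝ → ℂ := fun n t => g t * circleMap 0 1 (-t) ^ n with hG
  have hnorm (n : ℕ) (t : ℝ) : ‖G n t‖ = ‖g t‖ := by simp [hG]
  have hGm (n : ℕ) : AEStronglyMeasurable (G n) angleMeasure :=
    hg.1.mul (by fun_prop : Continuous fun t : ℝ => circleMap 0 1 (-t) ^ n).aestronglyMeasurable
  have hGp (n : ℕ) : MemLp (G n) P angleMeasure :=
    hg.of_le (hGm n) (.of_forall fun t => (hnorm n t).le)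
  have hterm (n : ℕ) :
      eLpNorm (fun θ => d n * circleMap 0 r θ ^ n * circleConv k (G n) (circleMap 0 r θ)) P
        angleMeasure ≤ ‖d n‖ₑ * (C * eLpNorm g P angleMeasure) := by
    refine (eLpNorm_le_nnreal_smul_eLpNorm_of_ae_le_mul (c := ‖d n‖₊) (.of_forall fun θ => ?_)
      P).trans (mul_le_mul_right ((hk _ (hGp n) r hr).trans_eq ?_) _)
    · rw [nnnorm_mul, nnnorm_mul, nnnorm_pow]
      gcongr
      exact mul_le_of_le_one_right (zero_le)
        (pow_le_one₀ (zero_le) (mem_ball_zero_iff.1 (circleMap_mem_unitBall hr θ)).le)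
    · rw [eLpNorm_congr_norm_ae (.of_forall fun t => hnorm n t)]
  calc _ ≤ ∑' n, eLpNorm (fun θ => d n * circleMap 0 r θ ^ n * circleConv k (G n)
          (circleMap 0 r θ)) P angleMeasure := by
        refine eLpNorm_le_tsum_eLpNorm hP (fun n => ?_) (.of_forall fun θ =>
          hasSum_circleConv_tsum_mul hkd.continuousOn hgi hds (circleMap_mem_unitBall hr θ))
        exact (by fun_prop : Continuous fun θ : ℝ => d n * circleMap 0 r θ ^ n).mul
          (continuous_circleConv_circleMap hkd ((hGp n).integrable hP) hr) |>.aestronglyMeasurable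
    _ ≤ ∑' n, ‖d n‖ₑ * (C * eLpNorm g P angleMeasure) := ENNReal.tsum_le_tsum hterm
    _ ≤ S * (C * eLpNorm g P angleMeasure) := by
        rw [ENNReal.tsum_mul_right]
        gcongr
    _ = (C * S : ℝ≥0) * eLpNorm g P angleMeasure := by
        push_cast
        ring

/-- The difference sequence `a 0, a 1 - a 0, a 2 - a 1, …`, whose partial sums are the `a n`. -/
def differences (a : ℕ → ℝ) : ℕ → ℝ
  | 0 => a 0
  | n + 1 => a (n + 1) - a n

variable {a : ℕ → ℝ} {S : ℝ≥0}

lemma sum_abs_differences_le (ha0 : ∀ n, 0 ≤ a n) (haS : ∀ n, a n ≤ S)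
    (hu : ∀ n, a (n + 1) ≤ a n → a (n + 2) ≤ a (n + 1)) (N : ℕ) :
    ∑ n ∈ Finset.range N, |differences a n| ≤ 2 * S := by
  -- The sum of the first `N + 1` terms is `a N` while `a` increases; once `a` decreases, the
  -- sum stays at most `2 * S - a N`.
  have hinv (N : ℕ) :
      (∑ n ∈ Finset.range (N + 1), |differences a n| ≤ 2 * S - a N ∧ a (N + 1) ≤ a N) ∨
        ∑ n ∈ Finset.range (N + 1), |differences a n| = a N := by
    induction N with
    | zero => right; simp [differences, abs_of_nonneg (ha0 0)]
    | succ N ih =>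
      rw [Finset.sum_range_succ, differences]
      rcases le_total (a (N + 1)) (a N) with hdec | hinc
      · left
        rw [abs_of_nonpos (by linarith)]
        refine ⟨?_, hu N hdec⟩
        rcases ih with ⟨hsum, -⟩ | hsum <;> linarith [haS N]
      · rw [abs_of_nonneg (by linarith)]
        rcases ih with ⟨hsum, hdec⟩ | hsum
        · left
          exact ⟨by linarith, hu N hdec⟩
        · right
          linarith
  cases N with
  | zero => simp
  | succ N => rcases hinv N with ⟨hsum, -⟩ | hsum <;> linarith [ha0 N, haS N, S.2]

lemma tsum_enorm_differences_le (ha0 : ∀ n, 0 ≤ a n) (haS : ∀ n, a n ≤ S)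
    (hu : ∀ n, a (n + 1) ≤ a n → a (n + 2) ≤ a (n + 1)) :
    ∑' n, ‖(differences a n : ℂ)‖ₑ ≤ (2 * S : ℝ≥0) := by
  refine ENNReal.tsum_le_of_sum_range_le fun N => ?_
  simp only [← ofReal_norm, Complex.norm_real, Real.norm_eq_abs]
  rw [← ENNReal.ofReal_sum_of_nonneg fun _ _ => abs_nonneg _, ← ENNReal.ofReal_coe_nnreal]
  exact ENNReal.ofReal_le_ofReal (by exact_mod_cast sum_abs_differences_le ha0 haS hu N)

lemma tsum_differences_mul_cauchyKernel {x : ℂ} (hx : x ∈ ball (0 : ℂ) 1)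
    (hs : Summable fun n => (a n : ℂ) * x ^ n) :
    (∑' n, (differences a n : ℂ) * x ^ n) * cauchyKernel x = ∑' n, (a n : ℂ) * x ^ n := by
  have hs' : Summable fun n => (a (n + 1) : ℂ) * x ^ (n + 1) := (summable_nat_add_iff 1).2 hs
  have hdiff (n : ℕ) : (differences a (n + 1) : ℂ) * x ^ (n + 1) =
      (a (n + 1) : ℂ) * x ^ (n + 1) - (a n : ℂ) * x ^ n * x := by
    simp only [differences]
    push_cast
    ring
  have hds : Summable fun n => (differences a n : ℂ) * x ^ n := by
    rw [← summable_nat_add_iff 1]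
    simpa only [hdiff] using hs'.sub (hs.mul_right x)
  rw [cauchyKernel, ← eq_mul_inv_iff_mul_eq₀ (inv_ne_zero (one_sub_ne_zero_of_mem_unitBall hx)),
    inv_inv, mul_one_sub, hds.tsum_eq_zero_add]
  nth_rw 1 [hs.tsum_eq_zero_add]
  rw [tsum_congr hdiff, hs'.tsum_sub (hs.mul_right x), tsum_mul_right, differences]
  ring

lemma summable_ofReal_mul_pow_of_le (ha0 : ∀ n, 0 ≤ a n) (haS : ∀ n, a n ≤ S) {x : ℂ}
    (hx : x ∈ ball (0 : ℂ) 1) : Summable fun n => (a n : ℂ) * x ^ n := by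
  refine .of_norm_bounded ((summable_geometric_of_lt_one (norm_nonneg x)
    (mem_ball_zero_iff.1 hx)).mul_left (S : ℝ)) fun n => ?_
  rw [norm_mul, norm_pow, Complex.norm_real, Real.norm_of_nonneg (ha0 n)]
  gcongr
  exact haS n

theorem CircleConvBound.of_unimodal {P : ℝ≥0∞} (hP : 1 ≤ P) {C : ℝ≥0}
    (hC : CircleConvBound P cauchyKernel C) (ha0 : ∀ n, 0 ≤ a n) (haS : ∀ n, a n ≤ S)
    (hu : ∀ n, a (n + 1) ≤ a n → a (n + 2) ≤ a (n + 1)) :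
    CircleConvBound P (fun x => ∑' n, (a n : ℂ) * x ^ n) (C * (2 * S)) :=
  (hC.tsum_mul hP differentiableOn_cauchyKernel (tsum_enorm_differences_le ha0 haS hu)).congr
    fun _ hx => tsum_differences_mul_cauchyKernel hx (summable_ofReal_mul_pow_of_le ha0 haS hx)

end Multipliers

section TailPushforward

variable (μ : Measure ℝ) [IsFiniteMeasure μ]

lemma antitone_measureReal_Ioi : Antitone fun r => μ.real (Ioi r) :=
  fun _ _ hab => measureReal_mono (Ioi_subset_Ioi hab)

lemma tendsto_measureReal_Ioi_atTop :
    Filter.Tendsto (fun r => μ.real (Ioi r)) Filter.atTop (nhds 0) := by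
  have hlim := (ENNReal.tendsto_toReal (measure_ne_top μ univ)).comp (tendsto_measure_Iic_atTop μ)
  have htail (r : ℝ) : μ.real (Ioi r) = μ.real univ - (μ (Iic r)).toReal := by
    rw [← compl_Iic, measureReal_compl measurableSet_Iic, measureReal_def μ (Iic r)]
  simpa [htail, measureReal_def] using (tendsto_const_nhds (x := μ.real univ)).sub hlim

lemma tendsto_measureReal_Ioi_atBot :
    Filter.Tendsto (fun r => μ.real (Ioi r)) Filter.atBot (nhds (μ.real univ)) := by
  have hlim := (ENNReal.tendsto_toReal (measure_ne_top μ univ)).comp (tendsto_measure_Ici_atBot μ)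
  have hshift : Filter.Tendsto (fun r : ℝ => r + 1) Filter.atBot Filter.atBot :=
    Filter.tendsto_atBot_add_const_right _ _ Filter.tendsto_id
  exact tendsto_of_tendsto_of_tendsto_of_le_of_le (hlim.comp hshift) tendsto_const_nhds
    (fun r => measureReal_mono (Ici_subset_Ioi.2 (lt_add_one r)))
    (fun r => measureReal_mono (subset_univ _))

variable [NullSingletonClass μ]

lemma continuous_measureReal_Ioi : Continuous fun r => μ.real (Ioi r) := by
  have heq : (fun r => μ.real (Ioi r)) = fun r => ∫ s, (Ioi r).indicator 1 s ∂μ := by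
    ext r
    rw [integral_indicator_one measurableSet_Ioi]
  rw [heq, continuous_iff_continuousAt]
  intro r₀
  refine continuousAt_of_dominated (bound := 1)
    (.of_forall fun r => (measurable_one.indicator measurableSet_Ioi).aestronglyMeasurable)
    (.of_forall fun r => .of_forall fun s => norm_indicator_le_norm_self _ _ |>.trans (by simp))
    (integrable_const 1) ?_
  filter_upwards [Measure.ae_ne μ r₀] with s hs
  rcases lt_or_gt_of_ne hs with hlt | hgt
  · refine continuousAt_const.congr (f := fun _ => (0 : ℝ)) ?_
    filter_upwards [Ioi_mem_nhds hlt] with r hr using (indicator_of_notMem (lt_asymm hr) _).symm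
  · refine continuousAt_const.congr (f := fun _ => (1 : ℝ)) ?_
    filter_upwards [Iio_mem_nhds hgt] with r hr using (indicator_of_mem (s := Ioi r) hr 1).symm

lemma exists_measureReal_Ioi_eq {a : ℝ} (ha : a ∈ Ioo 0 (μ.real univ)) :
    ∃ r, μ.real (Ioi r) = a :=
  mem_range_of_exists_le_of_exists_ge (continuous_measureReal_Ioi μ)
    ((tendsto_measureReal_Ioi_atTop μ).eventually_le_const ha.1).exists
    ((tendsto_measureReal_Ioi_atBot μ).eventually_const_le ha.2).exists

lemma measureReal_setOf_measureReal_Ioi_le {a : ℝ} (ha : a ∈ Icc 0 (μ.real univ)) :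
    μ.real {s | μ.real (Ioi s) ≤ a} = a := by
  apply le_antisymm
  · refine le_of_forall_gt_imp_ge_of_dense fun b hb => ?_
    rcases le_or_gt (μ.real univ) b with hub | hub
    · exact (measureReal_mono (subset_univ _)).trans hub
    obtain ⟨x, hx⟩ := exists_measureReal_Ioi_eq μ ⟨ha.1.trans_lt hb, hub⟩
    have hsub : {s | μ.real (Ioi s) ≤ a} ⊆ Ioi x := fun s (hs : μ.real (Ioi s) ≤ a) =>
      lt_of_not_ge fun hsx => (hs.trans_lt hb).not_ge (hx ▸ antitone_measureReal_Ioi μ hsx)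
    exact hx ▸ measureReal_mono hsub
  · rcases ha.1.eq_or_lt with rfl | ha0
    · exact measureReal_nonneg
    rcases ha.2.eq_or_lt with rfl | hau
    · exact measureReal_mono fun s _ => measureReal_mono (subset_univ _)
    obtain ⟨x, rfl⟩ := exists_measureReal_Ioi_eq μ ⟨ha0, hau⟩
    exact measureReal_mono fun s hs => antitone_measureReal_Ioi μ (le_of_lt hs)

theorem map_measureReal_Ioi :
    μ.map (fun r => μ.real (Ioi r)) = volume.restrict (Ioc 0 (μ.real univ)) := by
  have hm : Measurable fun r => μ.real (Ioi r) := (antitone_measureReal_Ioi μ).measurable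
  refine Measure.ext_of_Iic _ _ fun a => ?_
  rw [Measure.map_apply hm measurableSet_Iic, Measure.restrict_apply measurableSet_Iic,
    ← Ioi_inter_Iic, inter_left_comm, Iic_inter_Iic, Ioi_inter_Iic, Real.volume_Ioc, sub_zero]
  rcases lt_or_ge a 0 with ha | ha
  · have hempty : (fun r => μ.real (Ioi r)) ⁻¹' Iic a = ∅ :=
      eq_empty_of_forall_notMem fun s hs => (ha.trans_le measureReal_nonneg).not_ge hs
    rw [hempty, measure_empty, ENNReal.ofReal_of_nonpos ((min_le_left _ _).trans ha.le)]
  · have hpre : (fun r => μ.real (Ioi r)) ⁻¹' Iic a =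
        {s | μ.real (Ioi s) ≤ min a (μ.real univ)} := by
      ext s
      simp [measureReal_mono (μ := μ) (subset_univ (Ioi s))]
    rw [hpre, ← ofReal_measureReal, measureReal_setOf_measureReal_Ioi_le μ
      ⟨le_min ha measureReal_nonneg, min_le_right _ _⟩]

theorem setLIntegral_Ioi_comp_measureReal_Ioi {φ : ℝ → ℝ≥0∞} (hφ : Measurable φ) (r : ℝ) :
    ∫⁻ s in Ioi r, φ (μ.real (Ioi s)) ∂μ = ∫⁻ u in Ioc 0 (μ.real (Ioi r)), φ u := by
  have htail : ∀ s ∈ Ioi r, (μ.restrict (Ioi r)).real (Ioi s) = μ.real (Ioi s) := fun s hs => by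
    rw [measureReal_restrict_apply measurableSet_Ioi, inter_eq_left.2
      (Ioi_subset_Ioi (le_of_lt hs))]
  have hmap := map_measureReal_Ioi (μ.restrict (Ioi r))
  rw [measureReal_restrict_apply_univ] at hmap
  rw [← hmap, lintegral_map hφ (antitone_measureReal_Ioi _).measurable]
  exact setLIntegral_congr_fun measurableSet_Ioi fun s hs => by rw [htail s hs]

end TailPushforward

section PowerIntegrals

variable {β x c : ℝ}

lemma lintegral_Ioc_rpow (hβ : -1 < β) (hx : 0 ≤ x) :
    ∫⁻ u in Ioc 0 x, ENNReal.ofReal u ^ β = ENNReal.ofReal (x ^ (β + 1) / (β + 1)) := by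
  have hint := integral_rpow (a := 0) (b := x) (Or.inl hβ)
  rw [Real.zero_rpow (by linarith), sub_zero, intervalIntegral.integral_of_le hx] at hint
  rw [← hint, ofReal_integral_eq_lintegral_ofReal
    ((intervalIntegrable_iff_integrableOn_Ioc_of_le hx).1
      (intervalIntegral.intervalIntegrable_rpow' hβ))
    (ae_restrict_of_forall_mem measurableSet_Ioc fun u hu => Real.rpow_nonneg hu.1.le _)]
  exact setLIntegral_congr_fun measurableSet_Ioc fun u hu => ENNReal.ofReal_rpow_of_pos hu.1

lemma lintegral_Ioi_rpow (hβ : β < -1) (hx : 0 < x) :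
    ∫⁻ u in Ioi x, ENNReal.ofReal u ^ β = ENNReal.ofReal (-x ^ (β + 1) / (β + 1)) := by
  rw [← integral_Ioi_rpow_of_lt hβ hx, ofReal_integral_eq_lintegral_ofReal
    (integrableOn_Ioi_rpow_of_lt hβ hx)
    (ae_restrict_of_forall_mem measurableSet_Ioi fun u hu =>
      Real.rpow_nonneg (hx.trans hu).le _)]
  exact setLIntegral_congr_fun measurableSet_Ioi fun u hu =>
    ENNReal.ofReal_rpow_of_pos (hx.trans hu)

lemma lintegral_Ioc_rpow_eq_top (hβ : β ≤ -1) (hc : 0 < c) :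
    ∫⁻ u in Ioc 0 c, ENNReal.ofReal u ^ β = ⊤ := by
  by_contra hne
  refine hβ.not_gt ((intervalIntegral.integrableOn_Ioo_rpow_iff hc).1
    ⟨(measurable_id.pow_const β).aestronglyMeasurable, ?_⟩)
  rw [hasFiniteIntegral_iff_ofReal (ae_restrict_of_forall_mem measurableSet_Ioo fun u hu =>
    Real.rpow_nonneg hu.1.le _)]
  refine lt_of_le_of_lt ?_ (lt_top_iff_ne_top.2 hne)
  rw [← setLIntegral_congr_fun measurableSet_Ioo fun u hu => ENNReal.ofReal_rpow_of_pos hu.1]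
  exact lintegral_mono_set Ioo_subset_Ioc_self

lemma lintegral_Ioc_inv_max_mul_rpow_le {b : ℝ} (hb : b ∈ Ioo (0 : ℝ) 1) (hx : 0 < x) :
    ∫⁻ u in Ioc 0 c, (ENNReal.ofReal (max x u))⁻¹ * ENNReal.ofReal u ^ (-b) ≤
      ENNReal.ofReal (1 / (1 - b) + 1 / b) * ENNReal.ofReal x ^ (-b) := by
  obtain ⟨hb0, hb1⟩ := hb
  have : 0 < 1 - b := by linarith
  have hsub : Ioc 0 c ⊆ Ioc 0 x ∪ Ioi x := fun u hu =>
    (le_or_gt u x).imp (fun hux => ⟨hu.1, hux⟩) id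
  have hnear : ∫⁻ u in Ioc 0 x, (ENNReal.ofReal (max x u))⁻¹ * ENNReal.ofReal u ^ (-b) =
      ENNReal.ofReal (x ^ (-b) / (1 - b)) := by
    have hpow : x ^ (-b) / (1 - b) = x⁻¹ * (x ^ (-b + 1) / (-b + 1)) := by
      rw [Real.rpow_add_one hx.ne', neg_add_eq_sub]
      field_simp
    rw [hpow, ENNReal.ofReal_mul (by positivity), ENNReal.ofReal_inv_of_pos hx,
      ← lintegral_Ioc_rpow (by linarith) hx.le, ← lintegral_const_mul' _ _ (by simpa using hx)]
    exact setLIntegral_congr_fun measurableSet_Ioc fun u hu => by rw [max_eq_left hu.2]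
  have hfar : ∫⁻ u in Ioi x, (ENNReal.ofReal (max x u))⁻¹ * ENNReal.ofReal u ^ (-b) =
      ENNReal.ofReal (x ^ (-b) / b) := by
    have hpow : x ^ (-b) / b = -x ^ (-1 - b + 1) / (-1 - b + 1) := by
      have hexp : -1 - b + 1 = -b := by ring
      rw [hexp, neg_div_neg_eq]
    rw [hpow, ← lintegral_Ioi_rpow (by linarith) hx]
    refine setLIntegral_congr_fun measurableSet_Ioi fun u (hu : x < u) => ?_
    rw [max_eq_right hu.le, sub_eq_add_neg, ENNReal.rpow_add _ _ (by simpa using hx.trans hu)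
      ENNReal.ofReal_ne_top, ENNReal.rpow_neg_one]
  calc _ ≤ _ := (lintegral_mono_set hsub).trans (lintegral_union_le _ _ _)
    _ = ENNReal.ofReal ((1 / (1 - b) + 1 / b) * x ^ (-b)) := by
        rw [hnear, hfar, ← ENNReal.ofReal_add (by positivity) (by positivity)]
        congr 1
        ring
    _ = _ := by rw [ENNReal.ofReal_mul (by positivity), ENNReal.ofReal_rpow_of_pos hx]

end PowerIntegrals

section RadialWeights

/-- The measure `s ω(s) ds` on `(0, 1)`, the radial part of `ω dA` in polar coordinates. -/
def radialMeasure (w : ℝ → ℝ) : Measure ℝ :=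
  (volume.restrict (Ioo 0 1)).withDensity fun s => ENNReal.ofReal (s * w s)

instance (w : ℝ → ℝ) : NullSingletonClass (radialMeasure w) :=
  nullSingletonClass_withDensity _

/-- The weight `ω̂₁` as the tail of `radialMeasure`. It agrees with `hat1` on `[0, ∞)`, and is
measurable on the whole line. -/
def tail (w : ℝ → ℝ) (r : ℝ) : ℝ≥0∞ := radialMeasure w (Ioi r)

variable {w : ℝ → ℝ}

lemma antitone_tail (w : ℝ → ℝ) : Antitone (tail w) :=
  fun _ _ hab => measure_mono (Ioi_subset_Ioi hab)

lemma measurable_tail (w : ℝ → ℝ) : Measurable (tail w) := (antitone_tail w).measurable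

lemma ae_radialMeasure_mem_Ioo (w : ℝ → ℝ) : ∀ᵐ s ∂radialMeasure w, s ∈ Ioo (0 : ℝ) 1 :=
  (withDensity_absolutelyContinuous _ _).ae_le (ae_restrict_mem measurableSet_Ioo)

lemma radialMeasure_restrict_Ioi_zero (w : ℝ → ℝ) :
    (radialMeasure w).restrict (Ioi 0) = radialMeasure w :=
  Measure.restrict_eq_self_of_ae_mem ((ae_radialMeasure_mem_Ioo w).mono fun _ hs => hs.1)

namespace IsRadialWeight

lemma nonneg_of_mem_Ioo (hw : IsRadialWeight w) {s : ℝ} (hs : s ∈ Ioo (0 : ℝ) 1) : 0 ≤ w s :=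
  hw.1 s (Ioo_subset_Ico_self hs)

lemma integrableOn (hw : IsRadialWeight w) {r : ℝ} (hr : 0 ≤ r) : IntegrableOn w (Ioo r 1) :=
  hw.2.1.mono_set fun _ hs => ⟨hr.trans hs.1.le, hs.2⟩

lemma integrableOn_id_mul (hw : IsRadialWeight w) {r : ℝ} (hr : 0 ≤ r) :
    IntegrableOn (fun s => s * w s) (Ioo r 1) := by
  refine (hw.integrableOn hr).bdd_mul (c := 1) measurable_id.aestronglyMeasurable
    (ae_restrict_of_forall_mem measurableSet_Ioo fun s hs => ?_)
  rw [Real.norm_of_nonneg (hr.trans hs.1.le)]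
  exact hs.2.le

lemma aemeasurable_density (hw : IsRadialWeight w) :
    AEMeasurable (fun s => ENNReal.ofReal (s * w s)) (volume.restrict (Ioo 0 1)) :=
  (hw.integrableOn_id_mul le_rfl).aestronglyMeasurable.aemeasurable.ennreal_ofReal

lemma setLIntegral_Ioo_density_mul (hw : IsRadialWeight w) (φ : ℝ → ℝ≥0∞) {r : ℝ} (hr : 0 ≤ r) :
    ∫⁻ s in Ioo r 1, ENNReal.ofReal (s * w s) * φ s = ∫⁻ s in Ioi r, φ s ∂radialMeasure w := by
  have hinter : Ioi r ∩ Ioo 0 1 = Ioo r 1 := by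
    rw [← Ioi_inter_Iio, ← inter_assoc, Ioi_inter_Ioi, sup_eq_left.2 hr, Ioi_inter_Iio]
  have hmeas := hw.aemeasurable_density.mono_measure
    (Measure.restrict_mono (Ioo_subset_Ioo_left hr) le_rfl)
  rw [radialMeasure, restrict_withDensity measurableSet_Ioi,
    Measure.restrict_restrict measurableSet_Ioi, hinter]
  exact (lintegral_withDensity_eq_lintegral_mul_non_measurable₀ _ hmeas
    (.of_forall fun _ => ENNReal.ofReal_lt_top) φ).symm

lemma tail_eq_ofReal_hat1 (hw : IsRadialWeight w) {r : ℝ} (hr : 0 ≤ r) :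
    tail w r = ENNReal.ofReal (hat1 w r) := by
  rw [tail, ← setLIntegral_one, ← hw.setLIntegral_Ioo_density_mul _ hr, hat1,
    ofReal_integral_eq_lintegral_ofReal (hw.integrableOn_id_mul hr)
      (ae_restrict_of_forall_mem measurableSet_Ioo fun s hs =>
        mul_nonneg (hr.trans hs.1.le) (hw.nonneg_of_mem_Ioo ⟨hr.trans_lt hs.1, hs.2⟩))]
  simp

lemma isFiniteMeasure_radialMeasure (hw : IsRadialWeight w) :
    IsFiniteMeasure (radialMeasure w) := by
  refine ⟨?_⟩
  rw [← radialMeasure_restrict_Ioi_zero, Measure.restrict_apply_univ]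
  exact (hw.tail_eq_ofReal_hat1 le_rfl).trans_lt ENNReal.ofReal_lt_top

lemma hat1_nonneg (hw : IsRadialWeight w) {r : ℝ} (hr : 0 ≤ r) : 0 ≤ hat1 w r :=
  setIntegral_nonneg measurableSet_Ioo fun _ hs =>
    mul_nonneg (hr.trans hs.1.le) (hw.nonneg_of_mem_Ioo ⟨hr.trans_lt hs.1, hs.2⟩)

lemma hat1_le_hatw (hw : IsRadialWeight w) {r : ℝ} (hr : 0 ≤ r) : hat1 w r ≤ hatw w r :=
  setIntegral_mono_on (hw.integrableOn_id_mul hr) (hw.integrableOn hr) measurableSet_Ioo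
    fun _ hs => mul_le_of_le_one_left (hw.nonneg_of_mem_Ioo ⟨hr.trans_lt hs.1, hs.2⟩) hs.2.le

lemma mul_hatw_le_hat1 (hw : IsRadialWeight w) {r : ℝ} (hr : 0 ≤ r) :
    r * hatw w r ≤ hat1 w r := by
  rw [hatw, ← integral_const_mul]
  exact setIntegral_mono_on ((hw.integrableOn hr).const_mul r) (hw.integrableOn_id_mul hr)
    measurableSet_Ioo fun s hs =>
      mul_le_mul_of_nonneg_right hs.1.le (hw.nonneg_of_mem_Ioo ⟨hr.trans_lt hs.1, hs.2⟩)

lemma hat1_anti (hw : IsRadialWeight w) {r s : ℝ} (hr : 0 ≤ r) (hrs : r ≤ s) :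
    hat1 w s ≤ hat1 w r := by
  rw [← ENNReal.ofReal_le_ofReal_iff (hw.hat1_nonneg hr), ← hw.tail_eq_ofReal_hat1 hr,
    ← hw.tail_eq_ofReal_hat1 (hr.trans hrs)]
  exact antitone_tail w hrs

lemma hat1_pos (hw : IsRadialWeight w) {r : ℝ} (hr : r ∈ Ico (0 : ℝ) 1) : 0 < hat1 w r := by
  have hmid : (1 + r) / 2 ∈ Ico (0 : ℝ) 1 := ⟨by linarith [hr.1], by linarith [hr.2]⟩
  have hmid0 : 0 < (1 + r) / 2 := by linarith [hr.1]
  calc 0 < (1 + r) / 2 * hatw w ((1 + r) / 2) := mul_pos hmid0 (hw.2.2 _ hmid)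
    _ ≤ hat1 w ((1 + r) / 2) := hw.mul_hatw_le_hat1 hmid.1
    _ ≤ hat1 w r := hw.hat1_anti hr.1 (by linarith [hr.2])

lemma tail_ne_zero (hw : IsRadialWeight w) {r : ℝ} (hr : r < 1) : tail w r ≠ 0 := by
  have hpos := hw.hat1_pos ⟨le_max_right r 0, max_lt hr one_pos⟩
  refine (ne_of_gt (lt_of_lt_of_le ?_ (antitone_tail w (le_max_left r 0))))
  rwa [hw.tail_eq_ofReal_hat1 (le_max_right _ _), ENNReal.ofReal_pos]

lemma tail_ne_top (hw : IsRadialWeight w) (r : ℝ) : tail w r ≠ ⊤ :=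
  have := hw.isFiniteMeasure_radialMeasure
  measure_ne_top _ _

lemma exists_hat1_le_mul_hat1_sqrt (hw : IsRadialWeight w) (hD : Dhat w) :
    ∃ C : ℝ≥0, ∀ r ∈ Ico (0 : ℝ) 1, hat1 w r ≤ C * hat1 w (√r) := by
  obtain ⟨C, hC⟩ := hD
  have hC0 : 0 ≤ C := (pos_of_mul_pos_left ((hw.2.2 0 ⟨le_rfl, one_pos⟩).trans_le
    (hC 0 ⟨le_rfl, one_pos⟩)) (hw.2.2 _ ⟨by norm_num, by norm_num⟩).le).le
  refine ⟨⟨2 * C, by positivity⟩, fun r hr => ?_⟩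
  have hmid : 0 ≤ (1 + r) / 2 := by linarith [hr.1]
  have hhat : 0 < hatw w ((1 + r) / 2) := hw.2.2 _ ⟨hmid, by linarith [hr.2]⟩
  have hsqrt : √r ≤ (1 + r) / 2 := by
    nlinarith [Real.sq_sqrt hr.1, sq_nonneg (√r - 1)]
  have hcomp : hatw w ((1 + r) / 2) ≤ 2 * hat1 w ((1 + r) / 2) := by
    nlinarith [hw.mul_hatw_le_hat1 hmid, mul_nonneg hr.1 hhat.le]
  calc hat1 w r ≤ C * hatw w ((1 + r) / 2) := (hw.hat1_le_hatw hr.1).trans (hC r hr)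
    _ ≤ C * (2 * hat1 w ((1 + r) / 2)) := by gcongr
    _ ≤ C * (2 * hat1 w (√r)) := by
        gcongr
        exact hw.hat1_anti (Real.sqrt_nonneg r) hsqrt
    _ = 2 * C * hat1 w (√r) := by ring

theorem setLIntegral_Ioi_comp_tail (hw : IsRadialWeight w) {φ : ℝ≥0∞ → ℝ≥0∞} (hφ : Measurable φ)
    (r : ℝ) : ∫⁻ s in Ioi r, φ (tail w s) ∂radialMeasure w =
      ∫⁻ u in Ioc 0 (tail w r).toReal, φ (ENNReal.ofReal u) := by
  have := hw.isFiniteMeasure_radialMeasure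
  rw [tail, ← measureReal_def, ← setLIntegral_Ioi_comp_measureReal_Ioi (radialMeasure w)
    (φ := fun u => φ (ENNReal.ofReal u)) (by fun_prop) r]
  simp only [tail, ofReal_measureReal (measure_ne_top _ _)]

theorem lintegral_comp_tail (hw : IsRadialWeight w) {φ : ℝ≥0∞ → ℝ≥0∞} (hφ : Measurable φ) :
    ∫⁻ s, φ (tail w s) ∂radialMeasure w =
      ∫⁻ u in Ioc 0 (tail w 0).toReal, φ (ENNReal.ofReal u) := by
  rw [← hw.setLIntegral_Ioi_comp_tail hφ, radialMeasure_restrict_Ioi_zero]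

lemma setLIntegral_Ioi_tail_rpow (hw : IsRadialWeight w) {β : ℝ} (hβ : -1 < β) (r : ℝ) :
    ∫⁻ s in Ioi r, tail w s ^ β ∂radialMeasure w =
      tail w r ^ (β + 1) / ENNReal.ofReal (β + 1) := by
  have hβ1 : 0 < β + 1 := by linarith
  rw [hw.setLIntegral_Ioi_comp_tail (φ := (· ^ β)) (by fun_prop),
    lintegral_Ioc_rpow hβ ENNReal.toReal_nonneg, ENNReal.ofReal_div_of_pos hβ1,
    ← ENNReal.ofReal_rpow_of_nonneg ENNReal.toReal_nonneg hβ1.le,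
    ENNReal.ofReal_toReal (hw.tail_ne_top r)]

lemma lintegral_tail_rpow_eq_top (hw : IsRadialWeight w) {β : ℝ} (hβ : β ≤ -1) :
    ∫⁻ s, tail w s ^ β ∂radialMeasure w = ⊤ := by
  rw [hw.lintegral_comp_tail (φ := (· ^ β)) (by fun_prop), lintegral_Ioc_rpow_eq_top hβ
    (ENNReal.toReal_pos (hw.tail_ne_zero one_pos) (hw.tail_ne_top 0))]

lemma lintegral_inv_max_tail_mul_rpow_le (hw : IsRadialWeight w) {b : ℝ} (hb : b ∈ Ioo (0 : ℝ) 1)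
    {r : ℝ} (hr : r < 1) :
    ∫⁻ s, (max (tail w r) (tail w s))⁻¹ * tail w s ^ (-b) ∂radialMeasure w ≤
      ENNReal.ofReal (1 / (1 - b) + 1 / b) * tail w r ^ (-b) := by
  have hr0 := ENNReal.toReal_pos (hw.tail_ne_zero hr) (hw.tail_ne_top r)
  have hbound := lintegral_Ioc_inv_max_mul_rpow_le (c := (tail w 0).toReal) hb hr0
  rw [ENNReal.ofReal_toReal (hw.tail_ne_top r)] at hbound
  rw [hw.lintegral_comp_tail (φ := fun u => (max (tail w r) u)⁻¹ * u ^ (-b)) (by fun_prop)]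
  refine (lintegral_congr fun u => ?_).trans_le hbound
  rw [ENNReal.ofReal_max, ENNReal.ofReal_toReal (hw.tail_ne_top r)]

end IsRadialWeight

end RadialWeights

section MuckenhouptCondition

variable {p α : ℝ} {w : ℝ → ℝ}

lemma div_mul_rpow_rpow_conjExponent (hp : 1 < p) {x H : ℝ} (hx : 0 < x) (hH : 0 < H) :
    (x / (x * H ^ α) ^ (1 / p)) ^ (p / (p - 1)) = x * H ^ (-α / (p - 1)) := by
  have hp0 : p ≠ 0 := by positivity
  have hp1 : p - 1 ≠ 0 := by linarith
  have hH1 : x / (x * H ^ α) ^ (1 / p) = (x ^ (p - 1) * H ^ (-α)) ^ (1 / p) := by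
    rw [Real.mul_rpow (by positivity) (by positivity), Real.mul_rpow (by positivity)
      (by positivity), ← div_div, ← Real.rpow_mul hx.le, Real.rpow_neg hH.le,
      Real.inv_rpow (by positivity), div_eq_mul_inv _ ((H ^ α) ^ (1 / p))]
    congr 1
    nth_rewrite 1 [← Real.rpow_one x]
    rw [← Real.rpow_sub hx]
    congr 1
    field_simp
  have hexp : 1 / p * (p / (p - 1)) = 1 / (p - 1) := by field_simp
  rw [hH1, ← Real.rpow_mul (by positivity), hexp, Real.mul_rpow (by positivity) (by positivity),
    ← Real.rpow_mul hx.le, ← Real.rpow_mul hH.le, mul_one_div_cancel hp1, Real.rpow_one,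
    mul_one_div]

namespace IsRadialWeight

lemma tail_rpow_eq_ofReal (hw : IsRadialWeight w) {s : ℝ} (hs : s ∈ Ico (0 : ℝ) 1) (β : ℝ) :
    tail w s ^ β = ENNReal.ofReal (hat1 w s ^ β) := by
  rw [hw.tail_eq_ofReal_hat1 hs.1, ENNReal.ofReal_rpow_of_pos (hw.hat1_pos hs)]

lemma ofReal_mul_sigmaE (hw : IsRadialWeight w) (hp : 1 < p) {s : ℝ} (hs : s ∈ Ioo (0 : ℝ) 1) :
    ENNReal.ofReal s * sigmaE p w (fun s => w s * hat1 w s ^ α) s =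
      ENNReal.ofReal (s * w s) * tail w s ^ (-α / (p - 1)) := by
  have hs' : s ∈ Ico (0 : ℝ) 1 := Ioo_subset_Ico_self hs
  have hH := hw.hat1_pos hs'
  have hq : 0 < p / (p - 1) := div_pos (by linarith) (by linarith)
  rw [sigmaE, hw.tail_rpow_eq_ofReal hs']
  rcases (hw.nonneg_of_mem_Ioo hs).eq_or_lt with hw0 | hw0
  · simp [← hw0, hq]
  · rw [ENNReal.ofReal_rpow_of_pos (by positivity), ← ENNReal.ofReal_div_of_pos (by positivity),
      ENNReal.ofReal_rpow_of_pos (by positivity), div_mul_rpow_rpow_conjExponent hp hw0 hH,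
      ENNReal.ofReal_mul hw0.le, ENNReal.ofReal_mul hs.1.le, mul_assoc]

lemma setLIntegral_mul_weight_mul_hat1_rpow (hw : IsRadialWeight w) (hα : -1 < α) {r : ℝ}
    (hr : 0 ≤ r) : ∫⁻ s in Ioo r 1, ENNReal.ofReal (s * (w s * hat1 w s ^ α)) =
      tail w r ^ (α + 1) / ENNReal.ofReal (α + 1) := by
  rw [← hw.setLIntegral_Ioi_tail_rpow hα, ← hw.setLIntegral_Ioo_density_mul _ hr]
  refine setLIntegral_congr_fun measurableSet_Ioo fun s hs => ?_
  have hs0 : s ∈ Ioo (0 : ℝ) 1 := ⟨hr.trans_lt hs.1, hs.2⟩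
  simp only [hw.tail_rpow_eq_ofReal (Ioo_subset_Ico_self hs0)]
  rw [← mul_assoc, ENNReal.ofReal_mul (mul_nonneg hs0.1.le (hw.nonneg_of_mem_Ioo hs0))]

lemma setLIntegral_mul_sigmaE (hw : IsRadialWeight w) (hp : 1 < p) {r : ℝ} (hr : 0 ≤ r) :
    ∫⁻ s in Ioo r 1, ENNReal.ofReal s * sigmaE p w (fun s => w s * hat1 w s ^ α) s =
      ∫⁻ s in Ioi r, tail w s ^ (-α / (p - 1)) ∂radialMeasure w := by
  rw [← hw.setLIntegral_Ioo_density_mul _ hr]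
  exact setLIntegral_congr_fun measurableSet_Ioo fun s hs =>
    hw.ofReal_mul_sigmaE hp ⟨hr.trans_lt hs.1, hs.2⟩

lemma ApE_eq_top (hw : IsRadialWeight w) (hp : 1 < p) (hα : -1 < α) (hpα : p - 1 ≤ α) :
    ApE p w (fun s => w s * hat1 w s ^ α) = ⊤ := by
  have hp1 : 0 < p - 1 := by linarith
  have hβ : -α / (p - 1) ≤ -1 := by rw [div_le_iff₀ hp1]; linarith
  have hexp : 0 < 1 - 1 / p := by rw [sub_pos, div_lt_one (by linarith)]; exact hp
  refine top_le_iff.1 (le_iSup₂_of_le 0 ⟨le_rfl, one_pos⟩ (top_le_iff.2 ?_))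
  rw [hw.setLIntegral_mul_sigmaE hp le_rfl, radialMeasure_restrict_Ioi_zero,
    hw.lintegral_tail_rpow_eq_top hβ, hw.setLIntegral_mul_weight_mul_hat1_rpow hα le_rfl,
    ENNReal.top_rpow_of_pos hexp, ENNReal.mul_top, ENNReal.top_div_of_ne_top ENNReal.ofReal_ne_top]
  refine (ENNReal.rpow_pos (ENNReal.div_pos ?_ ENNReal.ofReal_ne_top) ?_).ne'
  · exact (ENNReal.rpow_pos (hw.tail_ne_zero one_pos).bot_lt (hw.tail_ne_top 0)).ne'
  · exact ENNReal.div_ne_top (ENNReal.rpow_ne_top_of_nonneg (by linarith) (hw.tail_ne_top 0))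
      (ENNReal.ofReal_pos.2 (by linarith)).ne'

lemma ApE_lt_top (hw : IsRadialWeight w) (hp : 1 < p) (hα : -1 < α) (hαp : α < p - 1) :
    ApE p w (fun s => w s * hat1 w s ^ α) < ⊤ := by
  have hp0 : 0 < 1 / p := by positivity
  have hp1 : 0 < p - 1 := by linarith
  have hβ : -1 < -α / (p - 1) := by rw [lt_div_iff₀ hp1]; linarith
  have hp' : 0 < 1 - 1 / p := by rw [sub_pos, div_lt_one (by linarith)]; exact hp
  have hexp : (α + 1) * (1 / p) + (-α / (p - 1) + 1) * (1 - 1 / p) = 1 := by field_simp; ring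
  refine lt_of_le_of_lt (iSup₂_le fun r hr => ?_)
    (b := (ENNReal.ofReal (α + 1))⁻¹ ^ (1 / p) *
      (ENNReal.ofReal (-α / (p - 1) + 1))⁻¹ ^ (1 - 1 / p)) ?_
  · have hT0 := hw.tail_ne_zero hr.2
    rw [hw.setLIntegral_mul_weight_mul_hat1_rpow hα hr.1, hw.setLIntegral_mul_sigmaE hp hr.1,
      hw.setLIntegral_Ioi_tail_rpow hβ, ← hw.tail_eq_ofReal_hat1 hr.1,
      div_eq_mul_inv (_ ^ (α + 1)), div_eq_mul_inv (_ ^ (_ / _ + 1)),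
      ENNReal.mul_rpow_of_nonneg _ _ hp0.le, ENNReal.mul_rpow_of_nonneg _ _ hp'.le,
      mul_mul_mul_comm, ← ENNReal.rpow_mul, ← ENNReal.rpow_mul,
      ← ENNReal.rpow_add _ _ hT0 (hw.tail_ne_top r), hexp, ENNReal.rpow_one, mul_comm,
      ENNReal.mul_div_cancel_right hT0 (hw.tail_ne_top r)]
  · refine ENNReal.mul_lt_top (ENNReal.rpow_lt_top_of_nonneg hp0.le ?_)
      (ENNReal.rpow_lt_top_of_nonneg hp'.le ?_) <;>
    exact ENNReal.inv_ne_top.2 (ENNReal.ofReal_pos.2 (by linarith)).ne'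

theorem ApE_lt_top_iff (hw : IsRadialWeight w) (hp : 1 < p) (hα : -1 < α) :
    ApE p w (fun s => w s * hat1 w s ^ α) < ⊤ ↔ α < p - 1 :=
  ⟨fun h => lt_of_not_ge fun hpα => h.ne (hw.ApE_eq_top hp hα hpα), hw.ApE_lt_top hp hα⟩

end IsRadialWeight

end MuckenhouptCondition

section PolarCoordinates

lemma lintegral_unitBall_eq_lintegral_polar (F : ℂ → ℝ≥0∞) :
    ∫⁻ z in ball (0 : ℂ) 1, F z =
      ∫⁻ x in Ioo (0 : ℝ) 1 ×ˢ Ioo (-Real.pi) Real.pi,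
        ENNReal.ofReal x.1 * F (circleMap 0 x.1 x.2) := by
  have hsymm (x : ℝ × ℝ) : Complex.polarCoord.symm x = circleMap 0 x.1 x.2 := by
    rw [Complex.polarCoord_symm_apply, circleMap_zero, Complex.exp_mul_I, Complex.ofReal_cos,
      Complex.ofReal_sin]
  have hsub : Ioo (0 : ℝ) 1 ×ˢ Ioo (-Real.pi) Real.pi ⊆ polarCoord.target :=
    prod_mono Ioo_subset_Ioi_self Subset.rfl
  have hmeas : MeasurableSet (Ioo (0 : ℝ) 1 ×ˢ Ioo (-Real.pi) Real.pi) :=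
    measurableSet_Ioo.prod measurableSet_Ioo
  rw [← lintegral_indicator measurableSet_ball, ← Complex.lintegral_comp_polarCoord_symm,
    ← inter_eq_self_of_subset_left hsub, ← Measure.restrict_restrict hmeas,
    ← lintegral_indicator hmeas]
  refine setLIntegral_congr_fun polarCoord.open_target.measurableSet fun x hx => ?_
  have hball : circleMap 0 x.1 x.2 ∈ ball (0 : ℂ) 1 ↔ x ∈ Ioo (0 : ℝ) 1 ×ˢ
      Ioo (-Real.pi) Real.pi := by
    have hx1 : 0 < x.1 := hx.1
    have hx2 : x.2 ∈ Ioo (-Real.pi) Real.pi := hx.2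
    simp [abs_of_pos hx1, hx1, hx2.1, hx2.2]
  by_cases h : x ∈ Ioo (0 : ℝ) 1 ×ˢ Ioo (-Real.pi) Real.pi
  · simp only [hsymm, smul_eq_mul, indicator_of_mem h, indicator_of_mem (hball.2 h)]
  · simp only [hsymm, smul_eq_mul, indicator_of_notMem h, indicator_of_notMem (mt hball.1 h),
      mul_zero]

lemma quasiMeasurePreserving_norm_unitBall :
    Measure.QuasiMeasurePreserving (fun z : ℂ => ‖z‖) (volume.restrict (ball 0 1))
      (volume.restrict (Ioo 0 1)) := by
  refine ⟨measurable_norm, .mk fun N hN hN0 => ?_⟩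
  rw [Measure.map_apply measurable_norm hN, ← lintegral_indicator_one (measurable_norm hN),
    lintegral_unitBall_eq_lintegral_polar, Measure.volume_eq_prod, ← Measure.prod_restrict]
  have hfst : ∀ᵐ x ∂(volume.restrict (Ioo (0 : ℝ) 1)).prod
      (volume.restrict (Ioo (-Real.pi) Real.pi)), x.1 ∈ Ioo (0 : ℝ) 1 ∧ x.1 ∉ N :=
    Measure.quasiMeasurePreserving_fst.ae
      ((ae_restrict_mem measurableSet_Ioo).and (measure_eq_zero_iff_ae_notMem.1 hN0))
  refine lintegral_eq_zero_of_ae_eq_zero (hfst.mono fun x hx => ?_)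
  simp [hx.2, abs_of_pos hx.1.1]

/-- The measure `ω dA` on the unit disc, where `dA` is normalized area measure. -/
def discMeasure (w : ℝ → ℝ) : Measure ℂ :=
  (ENNReal.ofReal Real.pi)⁻¹ •
    (volume.restrict (ball 0 1)).withDensity fun z => ENNReal.ofReal (w ‖z‖)

instance (w : ℝ → ℝ) : SFinite (radialMeasure w) := by
  rw [radialMeasure]
  infer_instance

variable {w : ℝ → ℝ}

lemma measurable_circleMap_prod : Measurable fun x : ℝ × ℝ => circleMap 0 x.1 x.2 := by
  unfold circleMap
  fun_prop

namespace IsRadialWeight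

lemma aemeasurable_weight_norm (hw : IsRadialWeight w) :
    AEMeasurable (fun z : ℂ => ENNReal.ofReal (w ‖z‖)) (volume.restrict (ball 0 1)) :=
  (hw.integrableOn le_rfl).aestronglyMeasurable.aemeasurable.ennreal_ofReal
    |>.comp_quasiMeasurePreserving quasiMeasurePreserving_norm_unitBall

lemma lintegral_discMeasure_eq_div (hw : IsRadialWeight w) (F : ℂ → ℝ≥0∞) :
    ∫⁻ z, F z ∂discMeasure w =
      (∫⁻ z in ball (0 : ℂ) 1, ENNReal.ofReal (w ‖z‖) * F z) / ENNReal.ofReal Real.pi := by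
  rw [discMeasure, lintegral_smul_measure, lintegral_withDensity_eq_lintegral_mul_non_measurable₀ _
    hw.aemeasurable_weight_norm (.of_forall fun _ => ENNReal.ofReal_lt_top), smul_eq_mul, mul_comm,
    div_eq_mul_inv]
  rfl

lemma radialMeasure_prod_angleMeasure (hw : IsRadialWeight w) :
    (radialMeasure w).prod angleMeasure = ENNReal.ofReal (2 * Real.pi)⁻¹ •
      (volume.restrict (Ioo (0 : ℝ) 1 ×ˢ Ioo (-Real.pi) Real.pi)).withDensity
        fun x => ENNReal.ofReal (x.1 * w x.1) := by
  rw [radialMeasure, angleMeasure, Measure.prod_smul_right,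
    prod_withDensity_left₀ hw.aemeasurable_density, Measure.prod_restrict]
  rfl

theorem lintegral_discMeasure (hw : IsRadialWeight w) (F : ℂ → ℝ≥0∞) :
    ∫⁻ z, F z ∂discMeasure w =
      2 * ∫⁻ x, F (circleMap 0 x.1 x.2) ∂(radialMeasure w).prod angleMeasure := by
  have hmeas : AEMeasurable (fun x : ℝ × ℝ => ENNReal.ofReal (x.1 * w x.1))
      (volume.restrict (Ioo (0 : ℝ) 1 ×ˢ Ioo (-Real.pi) Real.pi)) := by
    rw [Measure.volume_eq_prod, ← Measure.prod_restrict]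
    exact hw.aemeasurable_density.comp_quasiMeasurePreserving Measure.quasiMeasurePreserving_fst
  have hconst : 2 * ENNReal.ofReal (2 * Real.pi)⁻¹ = (ENNReal.ofReal Real.pi)⁻¹ := by
    rw [← ENNReal.ofReal_ofNat, ← ENNReal.ofReal_mul zero_le_two,
      ← ENNReal.ofReal_inv_of_pos Real.pi_pos]
    congr 1
    field_simp
  rw [hw.lintegral_discMeasure_eq_div, hw.radialMeasure_prod_angleMeasure, lintegral_smul_measure,
    lintegral_withDensity_eq_lintegral_mul_non_measurable₀ _ hmeas
      (.of_forall fun _ => ENNReal.ofReal_lt_top), smul_eq_mul, ← mul_assoc, hconst, mul_comm _⁻¹,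
    div_eq_mul_inv, lintegral_unitBall_eq_lintegral_polar]
  congr 1
  refine setLIntegral_congr_fun (measurableSet_Ioo.prod measurableSet_Ioo) fun x hx => ?_
  simp only [norm_circleMap_zero, abs_of_pos hx.1.1, Pi.mul_apply, ENNReal.ofReal_mul hx.1.1.le,
    mul_assoc]

theorem discMeasure_eq_map (hw : IsRadialWeight w) : discMeasure w =
    (2 : ℝ≥0∞) • ((radialMeasure w).prod angleMeasure).map fun x => circleMap 0 x.1 x.2 := by
  refine Measure.ext_of_lintegral _ fun F hF => ?_
  rw [hw.lintegral_discMeasure, lintegral_smul_measure, lintegral_map hF measurable_circleMap_prod,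
    smul_eq_mul]

lemma LpC_eq_lintegral_discMeasure (hw : IsRadialWeight w) {p : ℝ} (hp : 0 ≤ p) (α : ℝ)
    (f : ℂ → ℂ) : LpC p (fun s => w s * hat1 w s ^ α) f =
      (∫⁻ z, tail w ‖z‖ ^ α * ‖f z‖ₑ ^ p ∂discMeasure w) ^ (1 / p) := by
  rw [LpC, hw.lintegral_discMeasure_eq_div]
  congr 2
  refine setLIntegral_congr_fun measurableSet_ball fun z hz => ?_
  have hz' : ‖z‖ ∈ Ico (0 : ℝ) 1 := ⟨norm_nonneg z, mem_ball_zero_iff.1 hz⟩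
  have hwz : 0 ≤ w ‖z‖ := hw.1 _ hz'
  simp only [hw.tail_rpow_eq_ofReal hz', ← ofReal_norm, ENNReal.ofReal_rpow_of_nonneg
    (norm_nonneg _) hp]
  rw [← ENNReal.ofReal_mul (Real.rpow_nonneg (hw.hat1_nonneg hz'.1) α), ← ENNReal.ofReal_mul hwz]
  ring_nf

lemma Pw_eq_integral_discMeasure (hw : IsRadialWeight w) (f : ℂ → ℂ) (z : ℂ) :
    Pw w f z = ∫ ζ, f ζ * (starRingEnd ℂ) (Bker w z ζ) ∂discMeasure w := by
  rw [discMeasure, integral_smul_measure, integral_withDensity_eq_integral_toReal_smul₀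
    hw.aemeasurable_weight_norm (.of_forall fun _ => ENNReal.ofReal_lt_top), Pw,
    ENNReal.toReal_inv, ENNReal.toReal_ofReal Real.pi_pos.le, Complex.real_smul, div_eq_inv_mul,
    Complex.ofReal_inv]
  congr 1
  refine setIntegral_congr_fun measurableSet_ball fun ζ hζ => ?_
  have hwζ : 0 ≤ w ‖ζ‖ := hw.1 _ ⟨norm_nonneg ζ, mem_ball_zero_iff.1 hζ⟩
  simp only [ENNReal.toReal_ofReal hwζ, Complex.real_smul]
  ring

end IsRadialWeight

end PolarCoordinates

section BergmanKernel

lemma continuousOn_tsum_mul_pow {a : ℕ → ℂ}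
    (ha : ∀ q : ℝ≥0, q < 1 → ∃ C : ℝ, ∀ n, ‖a n‖ * (q : ℝ) ^ n ≤ C) :
    ContinuousOn (fun x => ∑' n, a n * x ^ n) (ball 0 1) := by
  set P := FormalMultilinearSeries.ofScalars ℂ a
  have hradius : 1 ≤ P.radius := by
    refine ENNReal.le_of_forall_nnreal_lt fun q hq => ?_
    obtain ⟨C, hC⟩ := ha q (by exact_mod_cast hq)
    exact P.le_radius_of_bound C fun n => by
      simpa only [P, FormalMultilinearSeries.ofScalars_norm] using hC n
  have hcont := (P.hasFPowerSeriesOnBall (one_pos.trans_le hradius)).continuousOn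
  have hball : ball (0 : ℂ) 1 ⊆ Metric.eball 0 P.radius := by
    rw [← NNReal.coe_one, ← Metric.eball_coe]
    exact Metric.eball_subset_eball (by simpa using hradius)
  refine (hcont.mono hball).congr fun x _ => ?_
  exact (FormalMultilinearSeries.ofScalars_sum_eq a x).symm

lemma sqrt_mem_Ico_zero_one {r : ℝ} (hr : r ∈ Ico (0 : ℝ) 1) : √r ∈ Ico (0 : ℝ) 1 :=
  ⟨Real.sqrt_nonneg r, (Real.sqrt_lt' one_pos).2 (by simpa using hr.2)⟩

lemma pow_mul_le_pow_mul_of_logConcave {c : ℕ → ℝ} {n : ℕ} (hc : 0 < c n)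
    (hlog : c n * c (n + 2) ≤ c (n + 1) ^ 2) (hc1 : 0 ≤ c (n + 1)) {q : ℝ} (hq : 0 ≤ q)
    (h : q ^ (n + 1) * c (n + 1) ≤ q ^ n * c n) :
    q ^ (n + 2) * c (n + 2) ≤ q ^ (n + 1) * c (n + 1) := by
  rcases hq.eq_or_lt with rfl | hq
  · simp
  have hstep : q * c (n + 1) ≤ c n := by
    rw [pow_succ, mul_assoc] at h
    exact le_of_mul_le_mul_left h (by positivity)
  have hnext : q * c (n + 2) ≤ c (n + 1) := by
    refine le_of_mul_le_mul_left ?_ hc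
    calc c n * (q * c (n + 2)) = q * (c n * c (n + 2)) := by ring
      _ ≤ q * c (n + 1) ^ 2 := by gcongr
      _ = q * c (n + 1) * c (n + 1) := by ring
      _ ≤ c n * c (n + 1) := by gcongr
  calc q ^ (n + 2) * c (n + 2) = q ^ (n + 1) * (q * c (n + 2)) := by ring
    _ ≤ q ^ (n + 1) * c (n + 1) := by gcongr

/-- The Bergman kernel as a function of the product `conj z * ζ`. -/
def kernelSeries (w : ℝ → ℝ) (x : ℂ) : ℂ := ∑' n, (((2 * moment w n)⁻¹ : ℝ) : ℂ) * x ^ n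

variable {w : ℝ → ℝ}

lemma conj_Bker (w : ℝ → ℝ) (z ζ : ℂ) :
    (starRingEnd ℂ) (Bker w z ζ) = kernelSeries w (z * (starRingEnd ℂ) ζ) := by
  rw [Bker, kernelSeries, Complex.conj_tsum]
  congr 1 with n
  rw [map_div₀, map_pow, map_mul, Complex.conj_conj, Complex.conj_ofReal, Complex.ofReal_inv,
    div_eq_inv_mul]

namespace IsRadialWeight

lemma integrableOn_pow_mul (hw : IsRadialWeight w) (n : ℕ) {r : ℝ} (hr : 0 ≤ r) :
    IntegrableOn (fun s => s ^ n * w s) (Ioo r 1) := by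
  refine (hw.integrableOn hr).bdd_mul (c := 1) (by fun_prop)
    (ae_restrict_of_forall_mem measurableSet_Ioo fun s hs => ?_)
  have hs0 : 0 ≤ s := hr.trans hs.1.le
  rw [Real.norm_of_nonneg (by positivity)]
  exact pow_le_one₀ hs0 hs.2.le

lemma pow_mul_hat1_le_moment (hw : IsRadialWeight w) {t : ℝ} (ht : 0 ≤ t) (n : ℕ) :
    t ^ (2 * n) * hat1 w t ≤ moment w n := by
  have hsub : Ioo t 1 ⊆ Ioo 0 1 := Ioo_subset_Ioo_left ht
  calc t ^ (2 * n) * hat1 w t = ∫ s in Ioo t 1, t ^ (2 * n) * (s * w s) :=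
        (integral_const_mul _ _).symm
    _ ≤ ∫ s in Ioo t 1, s ^ (2 * n + 1) * w s := by
        refine setIntegral_mono_on ((hw.integrableOn_id_mul ht).const_mul _)
          (hw.integrableOn_pow_mul _ ht) measurableSet_Ioo fun s hs => ?_
        have hs0 : 0 ≤ s * w s :=
          mul_nonneg (ht.trans hs.1.le) (hw.nonneg_of_mem_Ioo (hsub hs))
        rw [pow_succ, mul_assoc]
        gcongr
        exact hs.1.le
    _ ≤ moment w n := by
        refine setIntegral_mono_set (hw.integrableOn_pow_mul _ le_rfl)
          (ae_restrict_of_forall_mem measurableSet_Ioo fun s hs => ?_) hsub.eventuallyLE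
        exact mul_nonneg (pow_nonneg hs.1.le _) (hw.nonneg_of_mem_Ioo hs)

lemma moment_pos (hw : IsRadialWeight w) (n : ℕ) : 0 < moment w n :=
  (mul_pos (by positivity) (hw.hat1_pos ⟨by norm_num, by norm_num⟩)).trans_le
    (hw.pow_mul_hat1_le_moment (t := 1 / 2) (by norm_num) n)

lemma moment_sq_le (hw : IsRadialWeight w) (n : ℕ) :
    moment w (n + 1) ^ 2 ≤ moment w n * moment w (n + 2) := by
  have hint (m : ℕ) := hw.integrableOn_pow_mul m le_rfl
  have hquad (x : ℝ) :
      0 ≤ moment w n * (x * x) + -2 * moment w (n + 1) * x + moment w (n + 2) :=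
    calc 0 ≤ ∫ s in Ioo (0 : ℝ) 1, s ^ (2 * n + 1) * w s * (x - s ^ 2) ^ 2 :=
          setIntegral_nonneg measurableSet_Ioo fun s hs => mul_nonneg (mul_nonneg
            (pow_nonneg hs.1.le _) (hw.nonneg_of_mem_Ioo hs)) (sq_nonneg _)
      _ = ∫ s in Ioo (0 : ℝ) 1, (x * x * (s ^ (2 * n + 1) * w s) +
            -2 * x * (s ^ (2 * (n + 1) + 1) * w s) + s ^ (2 * (n + 2) + 1) * w s) := by
          congr 1 with s
          ring
      _ = _ := by
          rw [integral_add (((hint _).const_mul _).fun_add ((hint _).const_mul _)) (hint _),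
            integral_add ((hint _).const_mul _) ((hint _).const_mul _), integral_const_mul,
            integral_const_mul, moment, moment, moment]
          ring
  have hdiscrim := discrim_le_zero hquad
  rw [discrim] at hdiscrim
  linarith

lemma norm_kernelSeries_coeff (hw : IsRadialWeight w) (n : ℕ) :
    ‖(((2 * moment w n)⁻¹ : ℝ) : ℂ)‖ = (2 * moment w n)⁻¹ := by
  have := hw.moment_pos n
  rw [Complex.norm_real, Real.norm_of_nonneg (by positivity)]

lemma pow_mul_inv_moment_le (hw : IsRadialWeight w) {q : ℝ} (hq : q ∈ Ico (0 : ℝ) 1) (n : ℕ) :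
    q ^ n * (2 * moment w n)⁻¹ ≤ (2 * hat1 w √q)⁻¹ := by
  have hm := hw.moment_pos n
  have hH : 0 < hat1 w √q := hw.hat1_pos (sqrt_mem_Ico_zero_one hq)
  have hle := hw.pow_mul_hat1_le_moment (Real.sqrt_nonneg q) n
  rw [pow_mul, Real.sq_sqrt hq.1] at hle
  rw [← div_eq_mul_inv, inv_eq_one_div, div_le_div_iff₀ (by positivity) (by positivity)]
  linarith

lemma continuousOn_kernelSeries (hw : IsRadialWeight w) :
    ContinuousOn (kernelSeries w) (ball 0 1) :=
  continuousOn_tsum_mul_pow fun q hq => ⟨(2 * hat1 w √q)⁻¹, fun n => by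
    rw [hw.norm_kernelSeries_coeff, mul_comm]
    exact hw.pow_mul_inv_moment_le ⟨q.2, hq⟩ n⟩

lemma exists_le_norm_kernelSeries (hw : IsRadialWeight w) :
    ∃ ε ∈ Ioo (0 : ℝ) 1, ∃ κ > 0, ∀ x ∈ ball (0 : ℂ) ε, κ ≤ ‖kernelSeries w x‖ := by
  have hzero : ‖kernelSeries w 0‖ = (2 * moment w 0)⁻¹ := by
    rw [← hw.norm_kernelSeries_coeff, kernelSeries, tsum_eq_single 0 fun n hn => by simp [hn]]
    simp
  have hpos : 0 < ‖kernelSeries w 0‖ := by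
    have := hw.moment_pos 0
    rw [hzero]
    positivity
  have hcont := hw.continuousOn_kernelSeries.continuousAt (ball_mem_nhds _ one_pos)
  obtain ⟨ε, hε, hball⟩ := Metric.eventually_nhds_iff_ball.1
    (hcont.norm.eventually_const_lt (half_lt_self hpos))
  exact ⟨min ε (1 / 2), ⟨by positivity, by linarith [min_le_right ε (1 / 2)]⟩, _, half_pos hpos,
    fun x hx => (hball x (ball_subset_ball (min_le_left _ _) hx)).le⟩

lemma circleConv_kernelSeries_circleMap_mul (g : ℝ → ℂ) (q r θ : ℝ) :
    circleConv (kernelSeries w) g (circleMap 0 (q * r) θ) =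
      circleConv (fun x => ∑' n, ((q ^ n * (2 * moment w n)⁻¹ : ℝ) : ℂ) * x ^ n) g
        (circleMap 0 r θ) := by
  simp only [circleConv, kernelSeries]
  congr! 5 with t n
  rw [circleMap_mul_circleMap_neg, circleMap_mul_circleMap_neg, circleMap_zero, circleMap_zero]
  push_cast
  ring

lemma circleConvBound_pow_mul_inv_moment (hw : IsRadialWeight w) {p : ℝ≥0∞} (hp : 1 ≤ p)
    {C : ℝ≥0} (hC : CircleConvBound p cauchyKernel C) {q : ℝ} (hq : q ∈ Ico (0 : ℝ) 1) :
    CircleConvBound p (fun x => ∑' n, ((q ^ n * (2 * moment w n)⁻¹ : ℝ) : ℂ) * x ^ n)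
      (C * (2 * (2 * hat1 w √q)⁻¹.toNNReal)) := by
  refine hC.of_unimodal hp (fun n => ?_) (fun n => ?_) (fun n hn => ?_)
  · have := hw.moment_pos n
    have := hq.1
    positivity
  · exact (hw.pow_mul_inv_moment_le hq n).trans (Real.le_coe_toNNReal _)
  · have h0 := hw.moment_pos n
    have h1 := hw.moment_pos (n + 1)
    have := hw.moment_pos (n + 2)
    refine pow_mul_le_pow_mul_of_logConcave (c := fun n => (2 * moment w n)⁻¹) (by positivity) ?_
      (by positivity) hq.1 hn
    rw [← mul_inv, inv_pow]
    refine inv_anti₀ (by positivity) ?_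
    nlinarith [hw.moment_sq_le n]

/- Writing the radius as `√ρ * √ρ` and moving one factor into the coefficients makes these bounded
and unimodal. -/
theorem exists_eLpNorm_circleConv_kernelSeries_le (hw : IsRadialWeight w) (hD : Dhat w) {p : ℝ}
    (hp : 1 < p) : ∃ A : ℝ≥0, ∀ ρ ∈ Ico (0 : ℝ) 1, ∀ g : ℝ → ℂ,
      MemLp g (ENNReal.ofReal p) angleMeasure →
      eLpNorm (fun θ => circleConv (kernelSeries w) g (circleMap 0 ρ θ)) (ENNReal.ofReal p)
        angleMeasure ≤ A * (tail w ρ)⁻¹ * eLpNorm g (ENNReal.ofReal p) angleMeasure := by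
  obtain ⟨C, hC⟩ := exists_circleConvBound_cauchyKernel hp
  obtain ⟨D, hD⟩ := hw.exists_hat1_le_mul_hat1_sqrt hD
  refine ⟨C * D ^ 2, fun ρ hρ g hg => ?_⟩
  have hq := sqrt_mem_Ico_zero_one hρ
  have ht := sqrt_mem_Ico_zero_one hq
  have hHρ := hw.hat1_pos hρ
  have hHt := hw.hat1_pos ht
  have hdouble : hat1 w ρ ≤ D ^ 2 * hat1 w √√ρ :=
    calc hat1 w ρ ≤ D * hat1 w √ρ := hD ρ hρ
      _ ≤ D * (D * hat1 w √√ρ) := by gcongr; exact hD _ hq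
      _ = D ^ 2 * hat1 w √√ρ := by ring
  have hconst : 2 * (2 * hat1 w √√ρ)⁻¹.toNNReal ≤ D ^ 2 * (hat1 w ρ)⁻¹.toNNReal := by
    rw [← NNReal.coe_le_coe]
    push_cast [Real.coe_toNNReal _ (inv_nonneg.2 (mul_pos two_pos hHt).le),
      Real.coe_toNNReal _ (inv_nonneg.2 hHρ.le)]
    field_simp
    linarith
  calc eLpNorm (fun θ => circleConv (kernelSeries w) g (circleMap 0 ρ θ)) (ENNReal.ofReal p)
        angleMeasure
    _ ≤ (C * (2 * (2 * hat1 w √√ρ)⁻¹.toNNReal) : ℝ≥0) *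
          eLpNorm g (ENNReal.ofReal p) angleMeasure := by
        have h := hw.circleConvBound_pow_mul_inv_moment (ENNReal.one_le_ofReal.2 hp.le) hC hq
          g hg √ρ hq
        simpa only [← circleConv_kernelSeries_circleMap_mul, Real.mul_self_sqrt hρ.1] using h
    _ ≤ (C * (D ^ 2 * (hat1 w ρ)⁻¹.toNNReal) : ℝ≥0) *
          eLpNorm g (ENNReal.ofReal p) angleMeasure := by gcongr
    _ = (C * D ^ 2 : ℝ≥0) * (tail w ρ)⁻¹ * eLpNorm g (ENNReal.ofReal p) angleMeasure := by
        rw [hw.tail_eq_ofReal_hat1 hρ.1, ← ENNReal.ofReal_inv_of_pos hHρ, ← mul_assoc,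
          ENNReal.coe_mul]
        rfl

end IsRadialWeight

end BergmanKernel

section Necessity

lemma lintegral_Ioc_inv_mul_log_rpow {c : ℝ} (hc : 0 < c) (γ : ℝ) :
    ∫⁻ u in Ioc 0 c, ENNReal.ofReal (u⁻¹ * (1 + |Real.log u|) ^ (-γ)) =
      ∫⁻ x in Ici (-Real.log c), ENNReal.ofReal ((1 + |x|) ^ (-γ)) := by
  have himage : (fun x : ℝ => Real.exp (-x)) '' Ici (-Real.log c) = Ioc 0 c := by
    ext u
    refine ⟨?_, fun hu => ⟨-Real.log u, neg_le_neg (Real.log_le_log hu.1 hu.2), ?_⟩⟩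
    · rintro ⟨x, hx, rfl⟩
      exact ⟨Real.exp_pos _, (Real.le_log_iff_exp_le hc).1 (neg_le.1 hx)⟩
    · simp only [neg_neg, Real.exp_log hu.1]
  have hderiv (x : ℝ) : HasDerivAt (fun x : ℝ => Real.exp (-x)) (-Real.exp (-x)) x := by
    simpa using (hasDerivAt_neg x).exp
  rw [← himage, lintegral_image_eq_lintegral_abs_deriv_mul measurableSet_Ici
    (fun x _ => (hderiv x).hasDerivWithinAt) fun x _ y _ hxy => by simpa using hxy]
  refine lintegral_congr fun x => ?_
  rw [Real.log_exp, abs_neg, abs_neg, Real.abs_exp, ← ENNReal.ofReal_mul (Real.exp_pos _).le,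
    mul_inv_cancel_left₀ (Real.exp_ne_zero _)]

lemma lintegral_Ioc_inv_mul_log_rpow_lt_top {c γ : ℝ} (hc : 0 < c) (hγ : 1 < γ) :
    ∫⁻ u in Ioc 0 c, ENNReal.ofReal (u⁻¹ * (1 + |Real.log u|) ^ (-γ)) < ⊤ := by
  have hint : Integrable fun x : ℝ => (1 + ‖x‖) ^ (-γ) :=
    integrable_one_add_norm (by simpa using hγ)
  rw [lintegral_Ioc_inv_mul_log_rpow hc]
  exact (setLIntegral_le_lintegral _ _).trans_lt hint.lintegral_lt_top

/-- The profile of the test function for necessity: the logarithm puts `u⁻¹` into `L^p(u^α du)`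
near `0`, for every `α ≥ p - 1`, while keeping it out of `L¹(du)`. -/
def logProfile (u : ℝ) : ℝ := u⁻¹ * (1 + |Real.log u|)⁻¹

lemma measurable_logProfile : Measurable logProfile := by
  unfold logProfile
  fun_prop

lemma logProfile_nonneg {u : ℝ} (hu : 0 ≤ u) : 0 ≤ logProfile u := by
  unfold logProfile
  positivity

lemma lintegral_Ioc_rpow_mul_logProfile_rpow_lt_top {c p α : ℝ} (hc : 0 < c) (hp : 1 < p)
    (hα : p - 1 ≤ α) : ∫⁻ u in Ioc 0 c, ENNReal.ofReal (u ^ α * logProfile u ^ p) < ⊤ := by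
  have hle (u : ℝ) (hu : u ∈ Ioc 0 c) : u ^ α * logProfile u ^ p ≤
      c ^ (α - (p - 1)) * (u⁻¹ * (1 + |Real.log u|) ^ (-p)) := by
    have hu0 : 0 < u := hu.1
    have hlog : 0 < 1 + |Real.log u| := by positivity
    calc u ^ α * logProfile u ^ p
        = u ^ (α - (p - 1)) * (u⁻¹ * (1 + |Real.log u|) ^ (-p)) := by
          rw [logProfile, Real.mul_rpow (by positivity) (by positivity), Real.inv_rpow hu0.le,
            Real.inv_rpow hlog.le, ← Real.rpow_neg hlog.le, ← Real.rpow_neg hu0.le,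
            ← Real.rpow_neg_one u, ← mul_assoc, ← mul_assoc, ← Real.rpow_add hu0,
            ← Real.rpow_add hu0]
          ring_nf
      _ ≤ c ^ (α - (p - 1)) * (u⁻¹ * (1 + |Real.log u|) ^ (-p)) := by
          gcongr
          exact hu.2
  calc ∫⁻ u in Ioc 0 c, ENNReal.ofReal (u ^ α * logProfile u ^ p)
    _ ≤ ∫⁻ u in Ioc 0 c, ENNReal.ofReal (c ^ (α - (p - 1))) *
          ENNReal.ofReal (u⁻¹ * (1 + |Real.log u|) ^ (-p)) :=
        setLIntegral_mono' measurableSet_Ioc fun u hu => by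
          rw [← ENNReal.ofReal_mul (by positivity)]
          exact ENNReal.ofReal_le_ofReal (hle u hu)
    _ < ⊤ := by
        rw [lintegral_const_mul' _ _ ENNReal.ofReal_ne_top]
        exact ENNReal.mul_lt_top ENNReal.ofReal_lt_top
          (lintegral_Ioc_inv_mul_log_rpow_lt_top hc hp)

lemma lintegral_Ioc_logProfile_eq_top {c : ℝ} (hc : 0 < c) :
    ∫⁻ u in Ioc 0 c, ENNReal.ofReal (logProfile u) = ⊤ := by
  simp_rw [logProfile, ← Real.rpow_neg_one (1 + |_|)]
  rw [lintegral_Ioc_inv_mul_log_rpow hc]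
  by_contra hne
  set b := max (-Real.log c) 1
  have hint : IntegrableOn (fun x : ℝ => (1 + |x|) ^ (-1 : ℝ)) (Ioi b) := by
    refine ⟨Measurable.aestronglyMeasurable (by fun_prop), ?_⟩
    rw [hasFiniteIntegral_iff_ofReal (.of_forall fun x => by positivity)]
    have hsub : Ioi b ⊆ Ici (-Real.log c) :=
      Ioi_subset_Ici_self.trans (Ici_subset_Ici.2 (le_max_left _ _))
    exact (lintegral_mono_set hsub).trans_lt (lt_top_iff_ne_top.2 hne)
  refine not_integrableOn_Ioi_inv (a := b) ((hint.const_mul 2).mono' (by fun_prop)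
    (ae_restrict_of_forall_mem measurableSet_Ioi fun x hx => ?_))
  have hx1 : 1 < x := (le_max_right _ _).trans_lt hx
  rw [Real.rpow_neg_one, abs_of_pos (by positivity), Real.norm_of_nonneg (by positivity),
    ← div_eq_mul_inv, inv_eq_one_div, div_le_div_iff₀ (by positivity) (by positivity)]
  linarith

variable {w : ℝ → ℝ}

/-- The radial test function `logProfile (ω̂₁(z))`, which shows that `P_ω` is unbounded on `L^p_ν`
for `ν = ω ω̂₁^α` with `α ≥ p - 1`. -/
def logTest (w : ℝ → ℝ) (z : ℂ) : ℂ := (logProfile (tail w ‖z‖).toReal : ℂ)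

lemma measurable_logTest (w : ℝ → ℝ) : Measurable (logTest w) :=
  Complex.measurable_ofReal.comp
    (measurable_logProfile.comp ((measurable_tail w).comp measurable_norm).ennreal_toReal)

lemma enorm_logTest (w : ℝ → ℝ) (z : ℂ) :
    ‖logTest w z‖ₑ = ENNReal.ofReal (logProfile (tail w ‖z‖).toReal) := by
  rw [logTest, ← ofReal_norm, Complex.norm_of_nonneg (logProfile_nonneg ENNReal.toReal_nonneg)]

lemma ae_discMeasure_mem_ball (w : ℝ → ℝ) : ∀ᵐ z ∂discMeasure w, z ∈ ball (0 : ℂ) 1 :=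
  Measure.ae_smul_measure
    ((withDensity_absolutelyContinuous _ _).ae_le (ae_restrict_mem measurableSet_ball)) _

namespace IsRadialWeight

lemma lintegral_discMeasure_comp_tail (hw : IsRadialWeight w) {φ : ℝ≥0∞ → ℝ≥0∞}
    (hφ : Measurable φ) : ∫⁻ z, φ (tail w ‖z‖) ∂discMeasure w =
      2 * ∫⁻ u in Ioc 0 (tail w 0).toReal, φ (ENNReal.ofReal u) := by
  have hmeas : Measurable fun z : ℂ => φ (tail w ‖z‖) :=
    hφ.comp ((measurable_tail w).comp measurable_norm)
  have hprod : Measurable fun x : ℝ × ℝ => φ (tail w ‖circleMap 0 x.1 x.2‖) :=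
    hmeas.comp measurable_circleMap_prod
  rw [hw.lintegral_discMeasure, lintegral_prod _ hprod.aemeasurable, ← hw.lintegral_comp_tail hφ]
  congr 1
  refine lintegral_congr_ae ((ae_radialMeasure_mem_Ioo w).mono fun s hs => ?_)
  simp [abs_of_pos hs.1]

lemma lintegral_norm_mul_norm_Bker_lt_top_iff (hw : IsRadialWeight w) (f : ℂ → ℂ) (z : ℂ) :
    ∫⁻ ζ in ball (0 : ℂ) 1, ENNReal.ofReal (‖f ζ‖ * ‖Bker w z ζ‖ * w ‖ζ‖) < ⊤ ↔
      ∫⁻ ζ, ‖f ζ‖ₑ * ‖kernelSeries w (z * (starRingEnd ℂ) ζ)‖ₑ ∂discMeasure w < ⊤ := by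
  rw [hw.lintegral_discMeasure_eq_div, ENNReal.div_lt_iff (by simp [Real.pi_pos]) (by simp),
    ENNReal.top_mul (by simp [Real.pi_pos])]
  congr! 3 with ζ
  rw [← conj_Bker, RCLike.enorm_conj, mul_comm (ENNReal.ofReal _),
    ENNReal.ofReal_mul (by positivity), ENNReal.ofReal_mul (by positivity), ofReal_norm,
    ofReal_norm]

/-- Near the origin the kernel is bounded below, so absolute convergence of the projection there
forces integrability. -/
theorem lintegral_enorm_lt_top_of_pwBounded (hw : IsRadialWeight w) {p : ℝ} {v : ℝ → ℝ}
    (hB : PwBounded p w v) {f : ℂ → ℂ} (hf : Measurable f) (hfp : LpC p v f < ⊤) :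
    ∫⁻ z, ‖f z‖ₑ ∂discMeasure w < ⊤ := by
  obtain ⟨C, -, hC⟩ := hB
  obtain ⟨ε, hε, κ, hκ, hle⟩ := hw.exists_le_norm_kernelSeries
  obtain ⟨z, hz, hconv⟩ : ∃ z ∈ ball (0 : ℂ) ε,
      ∫⁻ ζ in ball (0 : ℂ) 1, ENNReal.ofReal (‖f ζ‖ * ‖Bker w z ζ‖ * w ‖ζ‖) < ⊤ := by
    have hae := ae_restrict_of_ae_restrict_of_subset (ball_subset_ball hε.2.le) (hC f hf hfp).1
    have : NeZero (volume.restrict (ball (0 : ℂ) ε)) :=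
      ⟨Measure.restrict_eq_zero.not.2 (measure_ball_pos volume _ hε.1).ne'⟩
    exact ((ae_restrict_mem measurableSet_ball).and hae).exists
  rw [hw.lintegral_norm_mul_norm_Bker_lt_top_iff] at hconv
  have hlower : ENNReal.ofReal κ * ∫⁻ ζ, ‖f ζ‖ₑ ∂discMeasure w ≤
      ∫⁻ ζ, ‖f ζ‖ₑ * ‖kernelSeries w (z * (starRingEnd ℂ) ζ)‖ₑ ∂discMeasure w := by
    rw [← lintegral_const_mul' _ _ ENNReal.ofReal_ne_top]
    refine lintegral_mono_ae ((ae_discMeasure_mem_ball w).mono fun ζ hζ => ?_)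
    rw [mul_comm, ← ofReal_norm (kernelSeries w _)]
    gcongr
    refine hle _ ?_
    rw [mem_ball_zero_iff] at hz hζ ⊢
    rw [norm_mul, RCLike.norm_conj]
    exact (mul_le_of_le_one_right (norm_nonneg z) hζ.le).trans_lt hz
  exact ENNReal.lt_top_of_mul_ne_top_right (hlower.trans_lt hconv).ne (by simpa using hκ)

lemma LpC_logTest_lt_top (hw : IsRadialWeight w) {p α : ℝ} (hp : 1 < p) (hα : p - 1 ≤ α) :
    LpC p (fun s => w s * hat1 w s ^ α) (logTest w) < ⊤ := by
  have hc : 0 < (tail w 0).toReal :=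
    ENNReal.toReal_pos (hw.tail_ne_zero one_pos) (hw.tail_ne_top 0)
  rw [hw.LpC_eq_lintegral_discMeasure (by linarith)]
  simp_rw [enorm_logTest]
  rw [hw.lintegral_discMeasure_comp_tail
    (φ := fun t => t ^ α * ENNReal.ofReal (logProfile t.toReal) ^ p)
    (by have := measurable_logProfile; fun_prop)]
  refine ENNReal.rpow_lt_top_of_nonneg (by positivity)
    (ENNReal.mul_ne_top ENNReal.ofNat_ne_top ?_)
  refine ne_of_eq_of_ne (setLIntegral_congr_fun measurableSet_Ioc fun u hu => ?_)
    (lintegral_Ioc_rpow_mul_logProfile_rpow_lt_top hc hp hα).ne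
  have hu0 : 0 < u := hu.1
  simp only [ENNReal.toReal_ofReal hu0.le]
  rw [ENNReal.ofReal_rpow_of_pos hu0, ENNReal.ofReal_rpow_of_nonneg (logProfile_nonneg hu0.le)
    (by linarith), ENNReal.ofReal_mul (by positivity)]

lemma lintegral_enorm_logTest_eq_top (hw : IsRadialWeight w) :
    ∫⁻ z, ‖logTest w z‖ₑ ∂discMeasure w = ⊤ := by
  have hc : 0 < (tail w 0).toReal :=
    ENNReal.toReal_pos (hw.tail_ne_zero one_pos) (hw.tail_ne_top 0)
  simp_rw [enorm_logTest]
  rw [hw.lintegral_discMeasure_comp_tail (φ := fun t => ENNReal.ofReal (logProfile t.toReal))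
    (by have := measurable_logProfile; fun_prop), ENNReal.mul_eq_top]
  refine .inl ⟨two_ne_zero, (setLIntegral_congr_fun measurableSet_Ioc fun u hu => ?_).trans
    (lintegral_Ioc_logProfile_eq_top hc)⟩
  simp only [ENNReal.toReal_ofReal hu.1.le]

theorem lt_sub_one_of_pwBounded (hw : IsRadialWeight w) {p α : ℝ} (hp : 1 < p)
    (hB : PwBounded p w fun s => w s * hat1 w s ^ α) : α < p - 1 := by
  by_contra! hα
  exact (hw.lintegral_enorm_lt_top_of_pwBounded hB (measurable_logTest w)
    (hw.LpC_logTest_lt_top hp hα)).ne hw.lintegral_enorm_logTest_eq_top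

end IsRadialWeight

end Necessity

section Sufficiency

variable {w : ℝ → ℝ}

/-- The integral mean `M_p(s, f)`: the `L^p` norm of `f` on the circle of radius `s`, with respect
to normalized arc length. -/
def integralMean (p : ℝ) (f : ℂ → ℂ) (s : ℝ) : ℝ≥0∞ :=
  eLpNorm (fun t => f (circleMap 0 s t)) (ENNReal.ofReal p) angleMeasure

lemma integralMean_rpow {p : ℝ} (hp : 0 < p) (f : ℂ → ℂ) (s : ℝ) :
    integralMean p f s ^ p = ∫⁻ t, ‖f (circleMap 0 s t)‖ₑ ^ p ∂angleMeasure :=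
  eLpNorm_ofReal_rpow hp _

lemma measurable_integralMean {p : ℝ} (hp : 0 < p) {f : ℂ → ℂ} (hf : Measurable f) :
    Measurable (integralMean p f) := by
  have hpow : Measurable fun s => integralMean p f s ^ p := by
    simp_rw [integralMean_rpow hp]
    exact ((hf.comp measurable_circleMap_prod).enorm.pow_const p).lintegral_prod_right'
  simpa only [← ENNReal.rpow_mul, mul_inv_cancel₀ hp.ne', ENNReal.rpow_one] using
    hpow.pow_const p⁻¹

/-- The radial kernel `1 / max (ω̂₁(r)) (ω̂₁(s))`, which bounds the projection between circles of
radius `s` and `r`. -/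
def radialKernel (w : ℝ → ℝ) (r s : ℝ) : ℝ≥0∞ := (max (tail w r) (tail w s))⁻¹

lemma radialKernel_comm (w : ℝ → ℝ) (r s : ℝ) : radialKernel w r s = radialKernel w s r := by
  rw [radialKernel, max_comm, radialKernel]

lemma measurable_radialKernel (w : ℝ → ℝ) : Measurable (Function.uncurry (radialKernel w)) :=
  (((measurable_tail w).comp measurable_fst).max ((measurable_tail w).comp measurable_snd)).inv

lemma exists_schurExponent {p α : ℝ} (hp : 1 < p) (hα : -1 < α) (hαp : α < p - 1) :
    ∃ b ∈ Ioo (0 : ℝ) 1, b * (p - 1) - α ∈ Ioo (0 : ℝ) 1 := by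
  have hp1 : 0 < p - 1 := sub_pos.2 hp
  obtain ⟨τ, hlo, hhi⟩ := exists_between (show max 0 α < min (p - 1) (α + 1) from
    max_lt (lt_min hp1 (by linarith)) (lt_min hαp (lt_add_one α)))
  rw [max_lt_iff] at hlo
  rw [lt_min_iff] at hhi
  refine ⟨τ / (p - 1), ⟨div_pos hlo.1 hp1, (div_lt_one hp1).2 hhi.1⟩, ?_⟩
  rw [div_mul_cancel₀ _ hp1.ne']
  exact ⟨sub_pos.2 hlo.2, by linarith [hhi.2]⟩

namespace IsRadialWeight

lemma tail_rpow_add (hw : IsRadialWeight w) {r : ℝ} (hr : r < 1) (β γ : ℝ) :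
    tail w r ^ (β + γ) = tail w r ^ β * tail w r ^ γ :=
  ENNReal.rpow_add _ _ (hw.tail_ne_zero hr) (hw.tail_ne_top r)

lemma moment_le_moment_zero (hw : IsRadialWeight w) (n : ℕ) : moment w n ≤ moment w 0 :=
  setIntegral_mono_on (hw.integrableOn_pow_mul _ le_rfl) (hw.integrableOn_pow_mul _ le_rfl)
    measurableSet_Ioo fun s hs => mul_le_mul_of_nonneg_right
      (pow_le_pow_of_le_one hs.1.le hs.2.le (by lia)) (hw.nonneg_of_mem_Ioo hs)

/-- The series diverges off the disc, where the sum of a divergent series is `0` by convention. -/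
lemma kernelSeries_eq_zero (hw : IsRadialWeight w) {x : ℂ} (hx : 1 ≤ ‖x‖) :
    kernelSeries w x = 0 := by
  refine tsum_eq_zero_of_not_summable fun hsum => ?_
  have hpos := hw.moment_pos 0
  refine (show 0 < (2 * moment w 0)⁻¹ by positivity).not_ge
    (ge_of_tendsto hsum.tendsto_atTop_zero.norm (.of_forall fun n => ?_) |>.trans_eq norm_zero)
  have hn := hw.moment_pos n
  rw [norm_mul, norm_pow, hw.norm_kernelSeries_coeff]
  calc (2 * moment w 0)⁻¹ ≤ (2 * moment w n)⁻¹ := by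
        gcongr
        exact hw.moment_le_moment_zero n
    _ ≤ (2 * moment w n)⁻¹ * ‖x‖ ^ n :=
        le_mul_of_one_le_right (by positivity) (one_le_pow₀ hx)

lemma measurable_kernelSeries (hw : IsRadialWeight w) : Measurable (kernelSeries w) := by
  classical
  have hpiece : (ball 0 1).piecewise (kernelSeries w) 0 = kernelSeries w := by
    rw [piecewise_eq_indicator, indicator_eq_self, Function.support_subset_iff']
    exact fun x hx => hw.kernelSeries_eq_zero (by simpa using hx)
  rw [← hpiece]
  exact hw.continuousOn_kernelSeries.measurable_piecewise continuousOn_const measurableSet_ball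

lemma Pw_eq_integral_kernelSeries (hw : IsRadialWeight w) (f : ℂ → ℂ) (z : ℂ) :
    Pw w f z = ∫ ζ, f ζ * kernelSeries w (z * (starRingEnd ℂ) ζ) ∂discMeasure w := by
  simp_rw [hw.Pw_eq_integral_discMeasure, conj_Bker]

lemma measurable_mul_kernelSeries (hw : IsRadialWeight w) {f : ℂ → ℂ} (hf : Measurable f) :
    Measurable fun x : ℂ × ℂ => f x.2 * kernelSeries w (x.1 * (starRingEnd ℂ) x.2) :=
  (hf.comp measurable_snd).mul (hw.measurable_kernelSeries.comp
    (measurable_fst.mul (Complex.continuous_conj.measurable.comp measurable_snd)))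

lemma measurable_Pw (hw : IsRadialWeight w) {f : ℂ → ℂ} (hf : Measurable f) :
    Measurable (Pw w f) := by
  have : SFinite (discMeasure w) := by
    rw [discMeasure]
    infer_instance
  simp_rw [funext (hw.Pw_eq_integral_kernelSeries f)]
  exact (hw.measurable_mul_kernelSeries hf).stronglyMeasurable.integral_prod_right'.measurable

lemma integrable_mul_kernelSeries (hw : IsRadialWeight w) {f : ℂ → ℂ} (hf : Measurable f)
    (hfi : ∫⁻ ζ, ‖f ζ‖ₑ ∂discMeasure w < ⊤) {z : ℂ} (hz : z ∈ ball (0 : ℂ) 1) :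
    Integrable (fun ζ => f ζ * kernelSeries w (z * (starRingEnd ℂ) ζ)) (discMeasure w) := by
  obtain ⟨C, hC⟩ := (isCompact_closedBall (0 : ℂ) ‖z‖).exists_bound_of_continuousOn
    (hw.continuousOn_kernelSeries.mono (closedBall_subset_ball (mem_ball_zero_iff.1 hz)))
  have hk : Measurable fun ζ => kernelSeries w (z * (starRingEnd ℂ) ζ) :=
    hw.measurable_kernelSeries.comp (Complex.continuous_conj.measurable.const_mul z)
  have hfint : Integrable f (discMeasure w) := ⟨hf.aestronglyMeasurable, hfi⟩
  refine hfint.mul_bdd (c := C) hk.aestronglyMeasurable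
    ((ae_discMeasure_mem_ball w).mono fun ζ hζ => hC _ ?_)
  rw [mem_closedBall_zero_iff, norm_mul, RCLike.norm_conj]
  exact mul_le_of_le_one_right (norm_nonneg z) (mem_ball_zero_iff.1 hζ).le

theorem Pw_circleMap (hw : IsRadialWeight w) {f : ℂ → ℂ} (hf : Measurable f)
    (hfi : ∫⁻ ζ, ‖f ζ‖ₑ ∂discMeasure w < ⊤) {r : ℝ} (hr : r ∈ Ico (0 : ℝ) 1) (θ : ℝ) :
    Pw w f (circleMap 0 r θ) = 2 * ∫ s, circleConv (kernelSeries w)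
      (fun t => f (circleMap 0 s t)) (circleMap 0 (r * s) θ) ∂radialMeasure w := by
  have hprod (s t : ℝ) : circleMap 0 r θ * (starRingEnd ℂ) (circleMap 0 s t) =
      circleMap 0 (r * s) θ * circleMap 0 1 (-t) := by
    rw [conj_circleMap_zero, circleMap_zero_mul, circleMap_zero_mul, mul_one]
  have hint := hw.integrable_mul_kernelSeries hf hfi (circleMap_mem_unitBall hr θ)
  rw [hw.discMeasure_eq_map, integrable_smul_measure two_ne_zero ENNReal.ofNat_ne_top] at hint
  have hmeas := hint.aestronglyMeasurable
  rw [integrable_map_measure hmeas measurable_circleMap_prod.aemeasurable,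
    Function.comp_def] at hint
  rw [hw.Pw_eq_integral_kernelSeries, hw.discMeasure_eq_map, integral_smul_measure,
    integral_map measurable_circleMap_prod.aemeasurable hmeas, integral_prod _ hint]
  simp [hprod, circleConv]

lemma enorm_Pw_circleMap_le (hw : IsRadialWeight w) {f : ℂ → ℂ} (hf : Measurable f)
    (hfi : ∫⁻ ζ, ‖f ζ‖ₑ ∂discMeasure w < ⊤) {r : ℝ} (hr : r ∈ Ico (0 : ℝ) 1) (θ : ℝ) :
    ‖Pw w f (circleMap 0 r θ)‖ₑ ≤ 2 * ∫⁻ s, ‖circleConv (kernelSeries w)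
      (fun t => f (circleMap 0 s t)) (circleMap 0 (r * s) θ)‖ₑ ∂radialMeasure w := by
  rw [hw.Pw_circleMap hf hfi hr, enorm_mul]
  gcongr
  · simp [enorm]
  · exact enorm_integral_le_lintegral_enorm _

lemma measurable_circleConv_circleMap_mul (hw : IsRadialWeight w) {f : ℂ → ℂ} (hf : Measurable f)
    (r : ℝ) : Measurable fun x : ℝ × ℝ => circleConv (kernelSeries w)
      (fun t => f (circleMap 0 x.2 t)) (circleMap 0 (r * x.2) x.1) := by
  have hker : Measurable fun x : (ℝ × ℝ) × ℝ => f (circleMap 0 x.1.2 x.2) *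
      kernelSeries w (circleMap 0 (r * x.1.2) x.1.1 * circleMap 0 1 (-x.2)) := by
    have := hw.measurable_kernelSeries
    unfold circleMap
    fun_prop
  exact hker.stronglyMeasurable.integral_prod_right'.measurable

lemma exists_eLpNorm_circleConv_le_integralMean (hw : IsRadialWeight w) (hD : Dhat w) {p : ℝ}
    (hp : 1 < p) : ∃ A : ℝ≥0, ∀ f : ℂ → ℂ, Measurable f →
      ∀ r ∈ Ioo (0 : ℝ) 1, ∀ s ∈ Ioo (0 : ℝ) 1,
        eLpNorm (fun θ => circleConv (kernelSeries w) (fun t => f (circleMap 0 s t))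
          (circleMap 0 (r * s) θ)) (ENNReal.ofReal p) angleMeasure ≤
          A * (radialKernel w r s * integralMean p f s) := by
  obtain ⟨A, hA⟩ := hw.exists_eLpNorm_circleConv_kernelSeries_le hD hp
  refine ⟨A + 1, fun f hf r hr s hs => ?_⟩
  have hrs : r * s ∈ Ico (0 : ℝ) 1 := ⟨(mul_pos hr.1 hs.1).le, mul_lt_one_of_nonneg_of_lt_one_left
    hr.1.le hr.2 hs.2.le⟩
  have hfs : Measurable fun t => f (circleMap 0 s t) :=
    hf.comp (continuous_circleMap 0 s).measurable
  rcases eq_or_ne (integralMean p f s) ⊤ with htop | htop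
  · have hK : radialKernel w r s ≠ 0 :=
      ENNReal.inv_ne_zero.2 (max_ne_top (hw.tail_ne_top r) (hw.tail_ne_top s))
    simp [htop, ENNReal.mul_top hK]
  calc eLpNorm (fun θ => circleConv (kernelSeries w) (fun t => f (circleMap 0 s t))
        (circleMap 0 (r * s) θ)) (ENNReal.ofReal p) angleMeasure
    _ ≤ A * (tail w (r * s))⁻¹ * integralMean p f s :=
        hA _ hrs _ ⟨hfs.aestronglyMeasurable, lt_top_iff_ne_top.2 htop⟩
    _ ≤ (A + 1 : ℝ≥0) * (radialKernel w r s * integralMean p f s) := by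
        rw [mul_assoc]
        gcongr
        · exact le_self_add
        · exact ENNReal.inv_le_inv.2 (max_le
            (antitone_tail w (mul_le_of_le_one_right hr.1.le hs.2.le))
            (antitone_tail w (mul_le_of_le_one_left hs.1.le hr.2.le)))

theorem exists_integralMean_Pw_le (hw : IsRadialWeight w) (hD : Dhat w) {p : ℝ} (hp : 1 < p) :
    ∃ A : ℝ≥0, ∀ f : ℂ → ℂ, Measurable f → ∫⁻ ζ, ‖f ζ‖ₑ ∂discMeasure w < ⊤ →
      ∀ r ∈ Ioo (0 : ℝ) 1, integralMean p (Pw w f) r ≤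
        A * ∫⁻ s, radialKernel w r s * integralMean p f s ∂radialMeasure w := by
  have hp0 : 0 < p := by linarith
  obtain ⟨A, hA⟩ := hw.exists_eLpNorm_circleConv_le_integralMean hD hp
  refine ⟨2 * A, fun f hf hfi r hr => (ENNReal.rpow_le_rpow_iff hp0).1 ?_⟩
  set T : ℝ → ℝ → ℂ := fun θ s => circleConv (kernelSeries w) (fun t => f (circleMap 0 s t))
    (circleMap 0 (r * s) θ)
  have hT : Measurable (Function.uncurry fun θ s => ‖T θ s‖ₑ) :=
    (hw.measurable_circleConv_circleMap_mul hf r).enorm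
  calc integralMean p (Pw w f) r ^ p
    _ ≤ ∫⁻ θ, (2 * ∫⁻ s, ‖T θ s‖ₑ ∂radialMeasure w) ^ p ∂angleMeasure := by
        rw [integralMean_rpow hp0]
        gcongr with θ
        exact hw.enorm_Pw_circleMap_le hf hfi ⟨hr.1.le, hr.2⟩ θ
    _ = 2 ^ p * ∫⁻ θ, (∫⁻ s, ‖T θ s‖ₑ ∂radialMeasure w) ^ p ∂angleMeasure := by
        simp_rw [ENNReal.mul_rpow_of_nonneg _ _ hp0.le]
        exact lintegral_const_mul' _ _ (by simp)
    _ ≤ 2 ^ p * (∫⁻ s, (∫⁻ θ, ‖T θ s‖ₑ ^ p ∂angleMeasure) ^ (1 / p) ∂radialMeasure w) ^ p := by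
        gcongr
        exact rpow_lintegral_lintegral_le hp hT
    _ ≤ 2 ^ p * (∫⁻ s, A * (radialKernel w r s * integralMean p f s) ∂radialMeasure w) ^ p := by
        gcongr 2 ^ p * ?_ ^ p
        refine lintegral_mono_ae ((ae_radialMeasure_mem_Ioo w).mono fun s hs => ?_)
        rw [← eLpNorm_ofReal_rpow hp0, ← ENNReal.rpow_mul, mul_one_div_cancel hp0.ne',
          ENNReal.rpow_one]
        exact hA f hf r hr s hs
    _ = ((2 * A : ℝ≥0) * ∫⁻ s, radialKernel w r s * integralMean p f s ∂radialMeasure w) ^ p := by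
        rw [lintegral_const_mul' _ _ ENNReal.coe_ne_top, ← ENNReal.mul_rpow_of_nonneg _ _ hp0.le,
          ← mul_assoc, ENNReal.coe_mul, ENNReal.coe_ofNat]

theorem exists_lintegral_radialKernel_rpow_le (hw : IsRadialWeight w) {p α : ℝ} (hp : 1 < p)
    (hα : -1 < α) (hαp : α < p - 1) : ∃ B : ℝ≥0, ∀ N : ℝ → ℝ≥0∞, Measurable N →
      ∫⁻ r, tail w r ^ α * (∫⁻ s, radialKernel w r s * N s ∂radialMeasure w) ^ p
        ∂radialMeasure w ≤ B * ∫⁻ s, tail w s ^ α * N s ^ p ∂radialMeasure w := by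
  obtain ⟨b, hb, he⟩ := exists_schurExponent hp hα hαp
  set e := b * (p - 1) - α
  have htail := measurable_tail w
  have hweight {s : ℝ} (hs : s < 1) :
      tail w s ^ α * (tail w s ^ (-b)) ^ (p - 1) = tail w s ^ (-e) := by
    rw [← ENNReal.rpow_mul, ← hw.tail_rpow_add hs]
    congr 1
    ring
  refine ⟨(1 / (1 - b) + 1 / b).toNNReal ^ (p - 1) * (1 / (1 - e) + 1 / e).toNNReal,
    fun N hN => ?_⟩
  rw [ENNReal.coe_mul, ENNReal.coe_rpow_of_nonneg _ (sub_pos.2 hp).le]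
  refine lintegral_mul_rpow_kernel_le hp (measurable_radialKernel w)
    (φ := fun s => tail w s ^ (-b)) (ψ := fun s => tail w s ^ (-b))
    (u := fun s => tail w s ^ α) (v := fun s => tail w s ^ α)
    (by fun_prop) (by fun_prop) (by fun_prop) hN.aemeasurable ?_ ?_ ?_ ?_
  all_goals refine (ae_radialMeasure_mem_Ioo w).mono fun s hs => ?_
  · simp [hw.tail_ne_zero hs.2, hw.tail_ne_top s]
  · simp [hw.tail_ne_zero hs.2, hw.tail_ne_top s]
  · exact hw.lintegral_inv_max_tail_mul_rpow_le hb hs.2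
  · rw [hweight hs.2]
    refine (lintegral_congr_ae ?_).trans_le (hw.lintegral_inv_max_tail_mul_rpow_le he hs.2)
    refine (ae_radialMeasure_mem_Ioo w).mono fun r hr => ?_
    simp only [hweight hr.2]
    rw [mul_comm, radialKernel_comm, radialKernel]

lemma lintegral_enorm_lt_top_of_LpC_lt_top (hw : IsRadialWeight w) {p α : ℝ} (hp : 1 < p)
    (hαp : α < p - 1) {f : ℂ → ℂ} (hf : Measurable f)
    (hfp : LpC p (fun s => w s * hat1 w s ^ α) f < ⊤) : ∫⁻ z, ‖f z‖ₑ ∂discMeasure w < ⊤ := by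
  have hp0 : 0 < p := by linarith
  have hp1 : 0 < p - 1 := sub_pos.2 hp
  set b := α / (p - 1)
  have hb : -1 < -b := neg_lt_neg ((div_lt_one hp1).2 hαp)
  have htail := measurable_tail w
  have hfinite : ∫⁻ z, tail w ‖z‖ ^ (-b) ∂discMeasure w < ⊤ := by
    rw [hw.lintegral_discMeasure_comp_tail (φ := (· ^ (-b))) (by fun_prop),
      lintegral_Ioc_rpow hb ENNReal.toReal_nonneg]
    finiteness
  have hfp' : ∫⁻ z, tail w ‖z‖ ^ α * ‖f z‖ₑ ^ p ∂discMeasure w < ⊤ := by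
    rwa [hw.LpC_eq_lintegral_discMeasure hp0.le, ENNReal.rpow_lt_top_iff_of_pos (by positivity)]
      at hfp
  have hholder := rpow_lintegral_mul_le hp (μ := discMeasure w)
    (f := fun z => ‖f z‖ₑ * tail w ‖z‖ ^ b) (c := fun z => tail w ‖z‖ ^ (-b)) (by fun_prop)
    (by fun_prop)
  refine (ENNReal.rpow_lt_top_iff_of_pos hp0).1 (lt_of_eq_of_lt ?_ (hholder.trans_lt
    (ENNReal.mul_lt_top (lt_of_eq_of_lt ?_ hfp')
      (ENNReal.rpow_lt_top_of_nonneg hp1.le hfinite.ne))))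
  · congr 1
    refine lintegral_congr_ae ((ae_discMeasure_mem_ball w).mono fun z hz => ?_)
    simp only [mul_assoc, ← hw.tail_rpow_add (mem_ball_zero_iff.1 hz), add_neg_cancel,
      ENNReal.rpow_zero, mul_one]
  · refine lintegral_congr_ae ((ae_discMeasure_mem_ball w).mono fun z hz => ?_)
    have hexp : b * p + -b = α := by
      rw [← sub_eq_add_neg, ← mul_sub_one, div_mul_cancel₀ _ hp1.ne']
    simp only [ENNReal.mul_rpow_of_nonneg _ _ hp0.le, ← ENNReal.rpow_mul, mul_assoc,
      ← hw.tail_rpow_add (mem_ball_zero_iff.1 hz), hexp]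
    exact mul_comm _ _

lemma LpC_eq_lintegral_integralMean (hw : IsRadialWeight w) {p : ℝ} (hp : 0 < p) (α : ℝ)
    {f : ℂ → ℂ} (hf : Measurable f) : LpC p (fun s => w s * hat1 w s ^ α) f =
      (2 * ∫⁻ s, tail w s ^ α * integralMean p f s ^ p ∂radialMeasure w) ^ (1 / p) := by
  have htail := measurable_tail w
  have hprod : Measurable fun x : ℝ × ℝ =>
      tail w ‖circleMap 0 x.1 x.2‖ ^ α * ‖f (circleMap 0 x.1 x.2)‖ₑ ^ p := by
    have := measurable_circleMap_prod
    fun_prop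
  rw [hw.LpC_eq_lintegral_discMeasure hp.le, hw.lintegral_discMeasure,
    lintegral_prod _ hprod.aemeasurable]
  congr 2
  refine lintegral_congr_ae ((ae_radialMeasure_mem_Ioo w).mono fun s hs => ?_)
  have hfs : Measurable fun t => ‖f (circleMap 0 s t)‖ₑ ^ p :=
    (hf.comp (continuous_circleMap 0 s).measurable).enorm.pow_const p
  simp only [norm_circleMap_zero, abs_of_pos hs.1, integralMean_rpow hp]
  exact lintegral_const_mul _ hfs

theorem exists_LpC_Pw_le (hw : IsRadialWeight w) (hD : Dhat w) {p α : ℝ} (hp : 1 < p)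
    (hα : -1 < α) (hαp : α < p - 1) : ∃ C : ℝ≥0, ∀ f : ℂ → ℂ, Measurable f →
      ∫⁻ ζ, ‖f ζ‖ₑ ∂discMeasure w < ⊤ → LpC p (fun s => w s * hat1 w s ^ α) (Pw w f) ≤
        C * LpC p (fun s => w s * hat1 w s ^ α) f := by
  have hp0 : 0 < p := by linarith
  obtain ⟨A, hA⟩ := hw.exists_integralMean_Pw_le hD hp
  obtain ⟨B, hB⟩ := hw.exists_lintegral_radialKernel_rpow_le hp hα hαp
  refine ⟨A * B ^ (1 / p), fun f hf hfi => ?_⟩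
  have hmeans : ∫⁻ r, tail w r ^ α * integralMean p (Pw w f) r ^ p ∂radialMeasure w ≤
      A ^ p * (B * ∫⁻ s, tail w s ^ α * integralMean p f s ^ p ∂radialMeasure w) :=
    calc ∫⁻ r, tail w r ^ α * integralMean p (Pw w f) r ^ p ∂radialMeasure w
      _ ≤ ∫⁻ r, A ^ p * (tail w r ^ α * (∫⁻ s, radialKernel w r s * integralMean p f s
            ∂radialMeasure w) ^ p) ∂radialMeasure w := by
          refine lintegral_mono_ae ((ae_radialMeasure_mem_Ioo w).mono fun r hr => ?_)
          rw [mul_left_comm, ← ENNReal.mul_rpow_of_nonneg _ _ hp0.le]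
          gcongr
          exact hA f hf hfi r hr
      _ ≤ A ^ p * (B * ∫⁻ s, tail w s ^ α * integralMean p f s ^ p ∂radialMeasure w) := by
          rw [lintegral_const_mul' _ _ (by finiteness)]
          gcongr
          exact hB _ (measurable_integralMean hp0 hf)
  rw [hw.LpC_eq_lintegral_integralMean hp0 α (hw.measurable_Pw hf),
    hw.LpC_eq_lintegral_integralMean hp0 α hf]
  calc (2 * ∫⁻ r, tail w r ^ α * integralMean p (Pw w f) r ^ p ∂radialMeasure w) ^ (1 / p)
    _ ≤ (2 * (A ^ p * (B * ∫⁻ s, tail w s ^ α * integralMean p f s ^ p ∂radialMeasure w))) ^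
          (1 / p) := by gcongr
    _ = (A ^ p * B * (2 * ∫⁻ s, tail w s ^ α * integralMean p f s ^ p ∂radialMeasure w)) ^
          (1 / p) := by ring_nf
    _ = (A * B ^ (1 / p) : ℝ≥0) *
          (2 * ∫⁻ s, tail w s ^ α * integralMean p f s ^ p ∂radialMeasure w) ^ (1 / p) := by
        rw [ENNReal.mul_rpow_of_nonneg _ _ (by positivity),
          ENNReal.mul_rpow_of_nonneg _ _ (by positivity), ← ENNReal.rpow_mul,
          mul_one_div_cancel hp0.ne', ENNReal.rpow_one, ENNReal.coe_mul,
          ENNReal.coe_rpow_of_nonneg _ (by positivity)]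

theorem pwBounded_of_lt_sub_one (hw : IsRadialWeight w) (hD : Dhat w) {p α : ℝ} (hp : 1 < p)
    (hα : -1 < α) (hαp : α < p - 1) : PwBounded p w fun s => w s * hat1 w s ^ α := by
  obtain ⟨C, hC⟩ := hw.exists_LpC_Pw_le hD hp hα hαp
  refine ⟨C + 1, by positivity, fun f hf hfp => ?_⟩
  have hfi := hw.lintegral_enorm_lt_top_of_LpC_lt_top hp hαp hf hfp
  refine ⟨ae_restrict_of_forall_mem measurableSet_ball fun z hz => ?_,
    (hC f hf hfi).trans ?_⟩
  · rw [hw.lintegral_norm_mul_norm_Bker_lt_top_iff]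
    simpa only [HasFiniteIntegral, enorm_mul] using (hw.integrable_mul_kernelSeries hf hfi hz).2
  · gcongr
    rw [← ENNReal.ofReal_coe_nnreal]
    exact ENNReal.ofReal_le_ofReal (by simp)

end IsRadialWeight

end Sufficiency

/-- Theorem 1, first part. Let `1 < p < ∞`, `-1 < α < ∞`, `ω ∈ D̂` a radial
weight and `ν = ω ω̂₁^α`. Then `P_ω` is bounded on `L^p_ν` if and only if `A_p(ω,ν) < ∞`,
and this holds if and only if `α < p - 1`. -/
theorem forelli_rudin_type (p α : ℝ) (hp : 1 < p) (hα : -1 < α) (w : ℝ → ℝ)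
    (hw : IsRadialWeight w) (hwD : Dhat w) :
    (PwBounded p w (fun s => w s * hat1 w s ^ α) ↔
      ApE p w (fun s => w s * hat1 w s ^ α) < ⊤) ∧
    (ApE p w (fun s => w s * hat1 w s ^ α) < ⊤ ↔ α < p - 1) := by
  have hA := hw.ApE_lt_top_iff hp hα
  exact ⟨⟨fun hB => hA.2 (hw.lt_sub_one_of_pwBounded hp hB),
    fun hAp => hw.pwBounded_of_lt_sub_one hwD hp hα (hA.1 hAp)⟩, hA⟩

end
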